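/- Let k ≥ 2, s ≥ 1 and r be integers with 0 < r < 2k, and set d = 2sk + r. Suppose that d·F(r/(2k), (d−2k+r)/d) + H(r/(2k)) < 0. Then for every δ > 0 there exists N₀ such that for every integer N ≥ N₀ with 2k ∣ N·d, the number of d-regular simple graphs G on the vertex set {1,…,N} with the following property is at least (1−δ) times the total number of d-regular simple graphs on {1,…,N}: for every partition {1,…,N} = A_s ⊔ A_{s+1} with |A_{s+1}| = r·N/(2k), the graph G admits a k-star decomposition with exactly s stars centered at every vertex of A_s and exactly s+1 stars centered at every vertex of A_{s+1}. -/

import Mathlib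

/-- A graph is `d`-regular: every vertex has exactly `d` neighbors. -/
def IsRegularGraph {V : Type*} (G : SimpleGraph V) (d : ℕ) : Prop :=
  ∀ v, (G.neighborSet v).ncard = d

/-- `G` has a decomposition of its edge set into `k`-stars with exactly `m v`
stars centered at each vertex `v`.  A star is recorded as a pair `(center, edges)`. -/
def HasStarDecomp {V : Type*} [DecidableEq V] (G : SimpleGraph V) (k : ℕ)
    (m : V → ℕ) : Prop :=
  ∃ S : Finset (V × Finset (Sym2 V)),
    (∀ p ∈ S, p.2.card = k ∧ (↑p.2 : Set (Sym2 V)) ⊆ G.edgeSet ∧ ∀ e ∈ p.2, p.1 ∈ e) ∧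
    (∀ e ∈ G.edgeSet, ∃! p, p ∈ S ∧ e ∈ p.2) ∧
    (∀ v, (S.filter fun p => p.1 = v).card = m v)

/-- `h x = -x log x` (with `h 0 = 0`, since `Real.log 0 = 0`). -/
noncomputable def entH (x : ℝ) : ℝ := -x * Real.log x

/-- `H x = h x + h (1 - x)`. -/
noncomputable def entHH (x : ℝ) : ℝ := entH x + entH (1 - x)

/-- The rate function `F(x,t)`. -/
noncomputable def entF (x t : ℝ) : ℝ :=
  (1 / 2) * entH (t * x) + entH ((1 - t) * x) + (1 / 2) * entH (1 - (2 - t) * x) - entHH x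

section Switching

variable {V : Type*}

open Classical in
/-- The adjacency indicator of a graph. -/
noncomputable def adjInd (G : SimpleGraph V) (x y : V) : ℤ := if G.Adj x y then 1 else 0

open Classical in
/-- The pairs in `S × T` that are adjacent in `G`. -/
noncomputable def adjPairs (G : SimpleGraph V) (S T : Finset V) : Finset (V × V) :=
  (S ×ˢ T).filter fun p => G.Adj p.1 p.2

theorem mem_adjPairs {G : SimpleGraph V} {S T : Finset V} {p : V × V} :
    p ∈ adjPairs G S T ↔ (p.1 ∈ S ∧ p.2 ∈ T) ∧ G.Adj p.1 p.2 := by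
  simp [adjPairs]

theorem card_adjPairs_eq_sum (G : SimpleGraph V) (S T : Finset V) :
    ((adjPairs G S T).card : ℤ) = ∑ x ∈ S, ∑ y ∈ T, adjInd G x y := by
  rw [adjPairs, Finset.card_filter, Finset.sum_product]
  simp [adjInd]

theorem card_adjPairs_comm (G : SimpleGraph V) (S T : Finset V) :
    (adjPairs G S T).card = (adjPairs G T S).card := by
  have h : ((adjPairs G S T).card : ℤ) = (adjPairs G T S).card := by
    rw [card_adjPairs_eq_sum, card_adjPairs_eq_sum, Finset.sum_comm]
    exact Finset.sum_congr rfl fun y _ => Finset.sum_congr rfl fun x _ => by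
      by_cases h : G.Adj x y <;> simp [adjInd, G.adj_comm y x, h]
  exact_mod_cast h

variable [Fintype V]

theorem sum_adjInd (G : SimpleGraph V) (x : V) :
    ∑ y, adjInd G x y = (G.neighborSet x).ncard := by
  classical
  rw [Set.ncard_eq_toFinset_card']
  simp only [adjInd, Finset.sum_boole]
  congr 2
  ext y
  simp

theorem isRegularGraph_iff_sum {G : SimpleGraph V} {d : ℕ} :
    IsRegularGraph G d ↔ ∀ x, ∑ y, adjInd G x y = d := by
  simp only [sum_adjInd, IsRegularGraph, Nat.cast_inj]

theorem card_adjPairs_univ {G : SimpleGraph V} {d : ℕ} (hG : IsRegularGraph G d) (S : Finset V) :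
    (adjPairs G S Finset.univ).card = d * S.card := by
  have h : ((adjPairs G S Finset.univ).card : ℤ) = d * S.card := by
    rw [card_adjPairs_eq_sum]
    simp [isRegularGraph_iff_sum.1 hG, mul_comm]
  exact_mod_cast h

theorem card_adjPairs_add_compl [DecidableEq V] {G : SimpleGraph V} {d : ℕ}
    (hG : IsRegularGraph G d) (S T : Finset V) :
    (adjPairs G S T).card + (adjPairs G S Tᶜ).card = d * S.card := by
  have h : ((adjPairs G S T).card : ℤ) + (adjPairs G S Tᶜ).card = d * S.card := by
    rw [card_adjPairs_eq_sum, card_adjPairs_eq_sum, ← Finset.sum_add_distrib]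
    simp [Finset.sum_add_sum_compl, isRegularGraph_iff_sum.1 hG, mul_comm]
  exact_mod_cast h

/-- Replace the edges `ab`, `ce` by `ac`, `be`. -/
def switchGraph (G : SimpleGraph V) (a b c e : V) : SimpleGraph V where
  Adj x y := x ≠ y ∧ ((G.Adj x y ∧ s(x, y) ≠ s(a, b) ∧ s(x, y) ≠ s(c, e)) ∨
    s(x, y) = s(a, c) ∨ s(x, y) = s(b, e))
  symm := ⟨fun x y h => by
    rw [Sym2.eq_swap (a := y) (b := x), G.adj_comm]
    exact ⟨h.1.symm, h.2⟩⟩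
  loopless := ⟨fun x h => h.1 rfl⟩

omit [Fintype V] in
theorem adjInd_switchGraph [DecidableEq V] {G : SimpleGraph V} {a b c e : V} (hab : G.Adj a b)
    (hce : G.Adj c e) (hac : ¬ G.Adj a c) (hbe : ¬ G.Adj b e) (ac : a ≠ c) (ae : a ≠ e)
    (bc : b ≠ c) (be : b ≠ e) (x y : V) :
    adjInd (switchGraph G a b c e) x y = adjInd G x y
      - (if x = a then if y = b then 1 else 0 else 0)
      - (if x = b then if y = a then 1 else 0 else 0)
      - (if x = c then if y = e then 1 else 0 else 0)
      - (if x = e then if y = c then 1 else 0 else 0)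
      + (if x = a then if y = c then 1 else 0 else 0)
      + (if x = c then if y = a then 1 else 0 else 0)
      + (if x = b then if y = e then 1 else 0 else 0)
      + (if x = e then if y = b then 1 else 0 else 0) := by
  have ab := hab.ne
  have ce := hce.ne
  have h1 := hab.symm
  have h2 := hce.symm
  have h3 : ¬ G.Adj c a := fun h => hac h.symm
  have h4 : ¬ G.Adj e b := fun h => hbe h.symm
  have h5 : ∀ z, ¬ G.Adj z z := fun z => G.irrefl
  simp only [adjInd, switchGraph, ne_eq, Sym2.eq_iff]
  by_cases xa : x = a
  · subst xa
    by_cases yb : y = b <;> by_cases yc : y = c <;> by_cases yx : y = x <;> grind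
  by_cases xb : x = b
  · subst xb
    by_cases yb : y = a <;> by_cases yc : y = e <;> by_cases yx : y = x <;> grind
  by_cases xc : x = c
  · subst xc
    by_cases yb : y = a <;> by_cases yc : y = e <;> by_cases yx : y = x <;> grind
  by_cases xe : x = e
  · subst xe
    by_cases yb : y = b <;> by_cases yc : y = c <;> by_cases yx : y = x <;> grind
  by_cases yx : y = x <;> grind [SimpleGraph.Adj.ne]

theorem isRegularGraph_switchGraph {G : SimpleGraph V} {d : ℕ} (hG : IsRegularGraph G d)
    {a b c e : V} (hab : G.Adj a b)
    (hce : G.Adj c e) (hac : ¬ G.Adj a c) (hbe : ¬ G.Adj b e) (ac : a ≠ c) (ae : a ≠ e)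
    (bc : b ≠ c) (be : b ≠ e) : IsRegularGraph (switchGraph G a b c e) d := by
  classical
  rw [isRegularGraph_iff_sum] at hG ⊢
  intro x
  have key : ∀ (p : Prop) [Decidable p] (z : V),
      ∑ y, (if p then if y = z then (1 : ℤ) else 0 else 0) = if p then 1 else 0 := by
    intro p _ z
    split_ifs <;> simp
  simp only [adjInd_switchGraph hab hce hac hbe ac ae bc be, Finset.sum_add_distrib,
    Finset.sum_sub_distrib, key, hG x]
  ring

omit [Fintype V] in
theorem card_adjPairs_switchGraph {G : SimpleGraph V} {W : Finset V}
    {a b c e : V} (hab : G.Adj a b)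
    (hce : G.Adj c e) (hac : ¬ G.Adj a c) (hbe : ¬ G.Adj b e) (ha : a ∈ W) (hb : b ∈ W)
    (hc : c ∉ W) (he : e ∉ W) :
    (adjPairs (switchGraph G a b c e) W W).card + 2 = (adjPairs G W W).card := by
  classical
  have ac : a ≠ c := fun h => hc (h ▸ ha)
  have ae : a ≠ e := fun h => he (h ▸ ha)
  have bc : b ≠ c := fun h => hc (h ▸ hb)
  have be : b ≠ e := fun h => he (h ▸ hb)
  have key : ∀ (p : Prop) [Decidable p] (z : V),
      ∑ y ∈ W, (if p then if y = z then (1 : ℤ) else 0 else 0) =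
        if p then (if z ∈ W then 1 else 0) else 0 := by
    intro p _ z
    split_ifs <;> simp_all
  have h : ((adjPairs (switchGraph G a b c e) W W).card : ℤ) + 2 = (adjPairs G W W).card := by
    rw [card_adjPairs_eq_sum, card_adjPairs_eq_sum]
    simp only [adjInd_switchGraph hab hce hac hbe ac ae bc be, Finset.sum_add_distrib,
      Finset.sum_sub_distrib, key, ha, hb, hc, he, if_true, if_false, Finset.sum_ite_eq',
      ite_self, Finset.sum_const_zero]
    ring
  exact_mod_cast h

omit [Fintype V] in
theorem switchGraph_switchGraph {G : SimpleGraph V} {a b c e : V} (hab : G.Adj a b)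
    (hce : G.Adj c e) (hac : ¬ G.Adj a c) (hbe : ¬ G.Adj b e) (ac : a ≠ c) (ae : a ≠ e)
    (bc : b ≠ c) (be : b ≠ e) :
    switchGraph (switchGraph G a b c e) a c b e = G := by
  have ab := hab.ne
  have ce := hce.ne
  have h1 := hab.symm
  have h2 := hce.symm
  have h3 : ¬ G.Adj c a := fun h => hac h.symm
  have h4 : ¬ G.Adj e b := fun h => hbe h.symm
  ext x y
  have h5 : G.Adj x y → x ≠ y := fun h => h.ne
  simp only [switchGraph, ne_eq, Sym2.eq_iff]
  grind

open Classical in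
/-- The `d`-regular graphs with exactly `q` ordered adjacent pairs inside `W`. -/
noncomputable def regularWith (d : ℕ) (W : Finset V) (q : ℕ) : Finset (SimpleGraph V) :=
  Finset.univ.filter fun G => IsRegularGraph G d ∧ (adjPairs G W W).card = q

theorem mem_regularWith {d q : ℕ} {W : Finset V} {G : SimpleGraph V} :
    G ∈ regularWith d W q ↔ IsRegularGraph G d ∧ (adjPairs G W W).card = q := by
  simp [regularWith]

theorem card_adjPairs_bipartition [DecidableEq V] {G : SimpleGraph V} {d q : ℕ} {W : Finset V}
    (hG : G ∈ regularWith d W q) :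
    ((adjPairs G W Wᶜ).card : ℝ) = d * W.card - q ∧
    ((adjPairs G Wᶜ Wᶜ).card : ℝ) = d * Fintype.card V - 2 * d * W.card + q := by
  obtain ⟨hG, hq⟩ := mem_regularWith.1 hG
  have h1 := card_adjPairs_add_compl hG W W
  have h2 := card_adjPairs_add_compl hG Wᶜ W
  rw [card_adjPairs_comm G Wᶜ W] at h2
  have h3 := Finset.card_add_card_compl W
  rw [hq] at h1
  have h1' : (q : ℝ) + (adjPairs G W Wᶜ).card = d * W.card := by exact_mod_cast h1
  have h2' : ((adjPairs G W Wᶜ).card : ℝ) + (adjPairs G Wᶜ Wᶜ).card = d * Wᶜ.card := by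
    exact_mod_cast h2
  have h3' : (W.card : ℝ) + Wᶜ.card = Fintype.card V := by exact_mod_cast h3
  refine ⟨by linarith, ?_⟩
  rw [← h3']
  linarith

open Classical in
/-- The tuples `(a, b, c, e)` at which `G` can be switched, decreasing the number of edges
inside `W`. -/
noncomputable def downTuples (G : SimpleGraph V) (W : Finset V) : Finset ((V × V) × (V × V)) :=
  (adjPairs G W W ×ˢ adjPairs G Wᶜ Wᶜ).filter
    fun p => ¬ G.Adj p.1.1 p.2.1 ∧ ¬ G.Adj p.1.2 p.2.2

theorem le_card_downTuples [DecidableEq V] {G : SimpleGraph V} {d q : ℕ} {W : Finset V}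
    (hG : G ∈ regularWith d W q) :
    (q : ℝ) * (d * Fintype.card V - 2 * d * W.card + q - 2 * d ^ 2) ≤
      (downTuples G W).card := by
  classical
  have hQ := (card_adjPairs_bipartition hG).2
  obtain ⟨hG, hq⟩ := mem_regularWith.1 hG
  have hdeg : ∀ a : V, ((Finset.univ : Finset (V × V)).filter
      fun p => G.Adj a p.1 ∧ G.Adj p.1 p.2).card = d ^ 2 := by
    intro a
    have : ((((Finset.univ : Finset (V × V)).filter
      fun p => G.Adj a p.1 ∧ G.Adj p.1 p.2).card : ℕ) : ℤ) = d ^ 2 := by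
      rw [Finset.card_filter, ← Finset.univ_product_univ, Finset.sum_product]
      have : ∀ x y, ((if G.Adj a x ∧ G.Adj x y then 1 else 0 : ℕ) : ℤ) =
          adjInd G a x * adjInd G x y := by
        intro x y
        simp only [adjInd]
        split_ifs <;> simp_all
      push_cast at this ⊢
      simp only [this, ← Finset.mul_sum, isRegularGraph_iff_sum.1 hG, ← Finset.sum_mul]
      ring
    exact_mod_cast this
  have hfib : ∀ p : V × V, ((adjPairs G Wᶜ Wᶜ).card : ℝ) - 2 * d ^ 2 ≤
      ((adjPairs G Wᶜ Wᶜ).filter fun r => ¬ G.Adj p.1 r.1 ∧ ¬ G.Adj p.2 r.2).card := by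
    intro p
    have hsub : adjPairs G Wᶜ Wᶜ ⊆
        ((adjPairs G Wᶜ Wᶜ).filter fun r => ¬ G.Adj p.1 r.1 ∧ ¬ G.Adj p.2 r.2) ∪
        (((Finset.univ : Finset (V × V)).filter fun r => G.Adj p.1 r.1 ∧ G.Adj r.1 r.2) ∪
        (((Finset.univ : Finset (V × V)).filter
          fun r => G.Adj p.2 r.1 ∧ G.Adj r.1 r.2).map (Equiv.prodComm V V).toEmbedding)) := by
      intro r hr
      have := (mem_adjPairs.1 hr).2
      simp only [Finset.mem_union, Finset.mem_filter, hr, Finset.mem_univ, true_and,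
        Finset.mem_map_equiv, Equiv.prodComm_symm, Equiv.prodComm_apply, Prod.fst_swap,
        Prod.snd_swap, this, this.symm, and_true]
      tauto
    have h1 := (Finset.card_le_card hsub).trans (Finset.card_union_le _ _)
    have h2 := Finset.card_union_le
      ((Finset.univ : Finset (V × V)).filter fun r => G.Adj p.1 r.1 ∧ G.Adj r.1 r.2)
      (((Finset.univ : Finset (V × V)).filter
          fun r => G.Adj p.2 r.1 ∧ G.Adj r.1 r.2).map (Equiv.prodComm V V).toEmbedding)
    rw [Finset.card_map, hdeg, hdeg] at h2
    have h3 : (adjPairs G Wᶜ Wᶜ).card ≤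
      ((adjPairs G Wᶜ Wᶜ).filter fun r => ¬ G.Adj p.1 r.1 ∧ ¬ G.Adj p.2 r.2).card +
        (d ^ 2 + d ^ 2) := h1.trans (by omega)
    have h3' : ((adjPairs G Wᶜ Wᶜ).card : ℝ) ≤
      ((adjPairs G Wᶜ Wᶜ).filter fun r => ¬ G.Adj p.1 r.1 ∧ ¬ G.Adj p.2 r.2).card +
        (d ^ 2 + d ^ 2) := by exact_mod_cast h3
    linarith
  have hsum : ((downTuples G W).card : ℝ) = ∑ p ∈ adjPairs G W W,
      (((adjPairs G Wᶜ Wᶜ).filter fun r => ¬ G.Adj p.1 r.1 ∧ ¬ G.Adj p.2 r.2).card : ℝ) := by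
    have : (downTuples G W) = (adjPairs G W W ×ˢ adjPairs G Wᶜ Wᶜ).filter
        fun p => ¬ G.Adj p.1.1 p.2.1 ∧ ¬ G.Adj p.1.2 p.2.2 := by
      unfold downTuples
      congr!
    rw [this, Finset.card_filter, Finset.sum_product]
    push_cast
    refine Finset.sum_congr rfl fun p _ => ?_
    rw [Finset.card_filter]
    push_cast
    rfl
  rw [hsum]
  calc (q : ℝ) * (d * Fintype.card V - 2 * d * W.card + q - 2 * d ^ 2)
      = ∑ p ∈ adjPairs G W W, (((adjPairs G Wᶜ Wᶜ).card : ℝ) - 2 * d ^ 2) := by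
        rw [Finset.sum_const, hq, hQ, nsmul_eq_mul]
    _ ≤ _ := Finset.sum_le_sum fun p _ => hfib p

/-- The switching inequality. -/
theorem card_regularWith_add_two (d q : ℕ) (W : Finset V) :
    ((regularWith d W (q + 2)).card : ℝ) *
      ((q + 2) * (d * Fintype.card V - 2 * d * W.card + (q + 2) - 2 * d ^ 2)) ≤
      (regularWith d W q).card * (d * W.card - q) ^ 2 := by
  classical
  have hlow : ((regularWith d W (q + 2)).card : ℝ) *
      ((q + 2) * (d * Fintype.card V - 2 * d * W.card + (q + 2) - 2 * d ^ 2)) ≤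
      ((regularWith d W (q + 2)).sigma fun G => downTuples G W).card := by
    rw [Finset.card_sigma, ← nsmul_eq_mul, ← Finset.sum_const]
    push_cast
    refine Finset.sum_le_sum fun G hG => ?_
    have := le_card_downTuples hG
    push_cast at this
    exact this
  have hup : ((((regularWith d W q).sigma fun G =>
      adjPairs G W Wᶜ ×ˢ adjPairs G W Wᶜ).card : ℕ) : ℝ) =
      (regularWith d W q).card * (d * W.card - q) ^ 2 := by
    rw [Finset.card_sigma, ← nsmul_eq_mul, ← Finset.sum_const]
    push_cast
    refine Finset.sum_congr rfl fun G hG => ?_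
    rw [Finset.card_product]
    push_cast
    rw [(card_adjPairs_bipartition hG).1]
    ring
  rw [← hup]
  refine hlow.trans ?_
  norm_cast
  have hmem : ∀ G a b c e, (⟨G, ((a, b), (c, e))⟩ : Σ _ : SimpleGraph V, (V × V) × (V × V)) ∈
      ((regularWith d W (q + 2)).sigma fun G => downTuples G W) →
      G ∈ regularWith d W (q + 2) ∧ a ∈ W ∧ b ∈ W ∧ c ∉ W ∧ e ∉ W ∧ G.Adj a b ∧ G.Adj c e ∧
        ¬ G.Adj a c ∧ ¬ G.Adj b e := by
    intro G a b c e h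
    simp only [Finset.mem_sigma, downTuples, Finset.mem_filter, Finset.mem_product, mem_adjPairs,
      Finset.mem_compl] at h
    tauto
  refine Finset.card_le_card_of_injOn
    (fun z => ⟨switchGraph z.1 z.2.1.1 z.2.1.2 z.2.2.1 z.2.2.2,
      ((z.2.1.1, z.2.2.1), (z.2.1.2, z.2.2.2))⟩) ?_ ?_
  · rintro ⟨G, ⟨⟨a, b⟩, ⟨c, e⟩⟩⟩ hz
    obtain ⟨hG, ha, hb, hc, he, hab, hce, hac, hbe⟩ := hmem _ _ _ _ _ hz
    have ac : a ≠ c := fun h => hc (h ▸ ha)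
    have ae : a ≠ e := fun h => he (h ▸ ha)
    have bc : b ≠ c := fun h => hc (h ▸ hb)
    have be : b ≠ e := fun h => he (h ▸ hb)
    obtain ⟨hG, hq⟩ := mem_regularWith.1 hG
    have h1 := isRegularGraph_switchGraph hG hab hce hac hbe ac ae bc be
    have h2 := card_adjPairs_switchGraph hab hce hac hbe ha hb hc he
    simp only [Finset.coe_sigma, Set.mem_sigma_iff, Finset.mem_coe, mem_regularWith,
      Finset.mem_product, mem_adjPairs, Finset.mem_compl]
    refine ⟨⟨h1, by omega⟩, ⟨⟨ha, hc⟩, ?_⟩, ⟨hb, he⟩, ?_⟩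
    · exact ⟨ac, Or.inr (Or.inl rfl)⟩
    · exact ⟨be, Or.inr (Or.inr rfl)⟩
  · rintro ⟨G, ⟨⟨a, b⟩, ⟨c, e⟩⟩⟩ hz ⟨G', ⟨⟨a', b'⟩, ⟨c', e'⟩⟩⟩ hz' heq
    obtain ⟨hG, ha, hb, hc, he, hab, hce, hac, hbe⟩ := hmem _ _ _ _ _ hz
    obtain ⟨hG', ha', hb', hc', he', hab', hce', hac', hbe'⟩ := hmem _ _ _ _ _ hz'
    simp only [Sigma.mk.injEq, heq_eq_eq, Prod.mk.injEq] at heq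
    obtain ⟨hs, ⟨rfl, rfl⟩, rfl, rfl⟩ := heq
    have ac : a ≠ c := fun h => hc (h ▸ ha)
    have ae : a ≠ e := fun h => he (h ▸ ha)
    have bc : b ≠ c := fun h => hc (h ▸ hb)
    have be : b ≠ e := fun h => he (h ▸ hb)
    have h1 := switchGraph_switchGraph hab hce hac hbe ac ae bc be
    have h2 := switchGraph_switchGraph hab' hce' hac' hbe' ac ae bc be
    rw [hs, h2] at h1
    rw [h1]

end Switching

section Hall

variable {V : Type*} [Fintype V] [DecidableEq V]

theorem hasStarDecomp_of_equiv {G : SimpleGraph V} {k : ℕ} (hk : 0 < k) {m : V → ℕ}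
    (f : G.edgeSet ≃ Σ v, Fin (m v) × Fin k) (hf : ∀ e : G.edgeSet, (f e).1 ∈ (e : Sym2 V)) :
    HasStarDecomp G k m := by
  classical
  set star : (Σ v, Fin (m v)) → Finset (Sym2 V) := fun z =>
    (Finset.univ : Finset (Fin k)).image fun j => ((f.symm ⟨z.1, z.2, j⟩ : G.edgeSet) : Sym2 V)
    with hstar
  have mem_star : ∀ (e : G.edgeSet) z, (e : Sym2 V) ∈ star z ↔
      (⟨(f e).1, (f e).2.1⟩ : Σ v, Fin (m v)) = z := by
    rintro e ⟨v, i⟩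
    simp only [hstar, Finset.mem_image, Finset.mem_univ, true_and]
    constructor
    · rintro ⟨j, hj⟩
      have : f.symm ⟨v, i, j⟩ = e := Subtype.ext hj
      rw [← this, Equiv.apply_symm_apply]
    · intro h
      obtain ⟨⟨v', i', j'⟩, rfl⟩ := f.symm.surjective e
      rw [Equiv.apply_symm_apply] at h
      cases h
      exact ⟨j', rfl⟩
  have hsub : ∀ z, ∀ x ∈ star z, x ∈ G.edgeSet := by
    intro z x hx
    simp only [hstar, Finset.mem_image, Finset.mem_univ, true_and] at hx
    obtain ⟨j, rfl⟩ := hx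
    exact Subtype.coe_prop _
  have hcard : ∀ z, (star z).card = k := by
    intro z
    rw [hstar, Finset.card_image_of_injective]
    · simp
    · intro i j h
      have := f.symm.injective (Subtype.ext h)
      simpa using this
  have hinj : Function.Injective fun z : Σ v, Fin (m v) => (z.1, star z) := by
    intro z z' h
    simp only [Prod.mk.injEq] at h
    obtain ⟨x, hx⟩ := Finset.card_pos.1 (by rw [hcard z]; exact hk)
    have hx' := hx
    rw [h.2] at hx'
    rw [← (mem_star ⟨x, hsub z x hx⟩ z).1 hx, ← (mem_star ⟨x, hsub z x hx⟩ z').1 hx']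
  refine ⟨Finset.univ.image fun z : Σ v, Fin (m v) => (z.1, star z), ?_, ?_, ?_⟩
  · intro p hp
    obtain ⟨z, -, rfl⟩ := Finset.mem_image.1 hp
    refine ⟨hcard z, fun x hx => hsub z x hx, fun x hx => ?_⟩
    have h := (mem_star ⟨x, hsub z x hx⟩ z).1 hx
    have h2 := hf ⟨x, hsub z x hx⟩
    rw [← h]
    exact h2
  · intro x hx
    refine ⟨(_, star ⟨(f ⟨x, hx⟩).1, (f ⟨x, hx⟩).2.1⟩),
      ⟨Finset.mem_image_of_mem _ (Finset.mem_univ _), (mem_star ⟨x, hx⟩ _).2 rfl⟩, ?_⟩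
    rintro p ⟨hp, hxp⟩
    obtain ⟨z, -, rfl⟩ := Finset.mem_image.1 hp
    have h := (mem_star ⟨x, hx⟩ z).1 hxp
    subst h
    rfl
  · intro v
    rw [Finset.filter_image, Finset.card_image_of_injective _ hinj]
    have : (Finset.univ.filter fun z : Σ v, Fin (m v) => z.1 = v) =
        (Finset.univ : Finset (Fin (m v))).map ⟨Sigma.mk v, sigma_mk_injective⟩ := by
      ext ⟨w, i⟩
      simp only [Finset.mem_filter, Finset.mem_univ, true_and, Finset.mem_map,
        Function.Embedding.coeFn_mk]
      constructor
      · rintro rfl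
        exact ⟨i, rfl⟩
      · rintro ⟨a, ha⟩
        exact (congrArg Sigma.fst ha).symm
    rw [this, Finset.card_map, Finset.card_univ, Fintype.card_fin]

omit [Fintype V] [DecidableEq V] in
theorem card_filter_edges_le (G : SimpleGraph V) (U : Finset V) (s : Finset G.edgeSet)
    (hs : ∀ e ∈ s, ∀ v ∈ (e : Sym2 V), v ∈ U) : 2 * s.card ≤ (adjPairs G U U).card := by
  classical
  have key : ∀ e : G.edgeSet, ∃ p : V × V, s(p.1, p.2) = e := by
    rintro ⟨e, he⟩
    induction e with | _ a b => exact ⟨(a, b), rfl⟩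
  choose g hg using key
  have hadj : ∀ e, G.Adj (g e).1 (g e).2 := by
    intro e
    have := e.2
    rw [← hg e] at this
    exact this
  have hmem : ∀ e ∈ s, (g e).1 ∈ U ∧ (g e).2 ∈ U := fun e he =>
    ⟨hs e he _ (by rw [← hg e]; simp), hs e he _ (by rw [← hg e]; simp)⟩
  have h1 : (s.image g) ∪ (s.image fun e => (g e).swap) ⊆ adjPairs G U U := by
    intro p hp
    rw [Finset.mem_union, Finset.mem_image, Finset.mem_image] at hp
    rcases hp with ⟨e, he, rfl⟩ | ⟨e, he, rfl⟩
    · exact mem_adjPairs.2 ⟨hmem e he, hadj e⟩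
    · exact mem_adjPairs.2 ⟨(hmem e he).symm, (hadj e).symm⟩
  have hginj : Function.Injective g := fun e e' h => Subtype.ext (by rw [← hg e, ← hg e', h])
  have hdisj : Disjoint (s.image g) (s.image fun e => (g e).swap) := by
    rw [Finset.disjoint_left]
    intro p hp hp'
    obtain ⟨e, he, rfl⟩ := Finset.mem_image.1 hp
    obtain ⟨e', he', h⟩ := Finset.mem_image.1 hp'
    have hee : e' = e := by
      apply Subtype.ext
      rw [← hg e, ← hg e', ← h]
      simp [Sym2.eq_swap]
    subst hee
    have := congrArg Prod.fst h
    exact (hadj e').ne this.symm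
  have h2 := Finset.card_le_card h1
  rw [Finset.card_union_of_disjoint hdisj, Finset.card_image_of_injective _ hginj,
    Finset.card_image_of_injective _ (fun e e' h => hginj (Prod.swap_injective h))] at h2
  omega

/-- Hakimi's criterion, for star decompositions. -/
theorem hasStarDecomp_of_forall_le {G : SimpleGraph V} {k : ℕ} (hk : 0 < k) {m : V → ℕ}
    (htot : (adjPairs G Finset.univ Finset.univ).card = 2 * ∑ v, m v * k)
    (hle : ∀ U : Finset V, (adjPairs G U U).card < 2 * (∑ v ∈ U, m v * k + 1)) :
    HasStarDecomp G k m := by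
  classical
  let t : G.edgeSet → Finset (Σ v, Fin (m v) × Fin k) := fun e =>
    Finset.univ.filter fun z => z.1 ∈ (e : Sym2 V)
  obtain ⟨f, hfinj, hf⟩ := (Finset.all_card_le_biUnion_card_iff_exists_injective t).1 (by
    intro s
    set U : Finset V := Finset.univ.filter fun v => ∃ e ∈ s, v ∈ (e : Sym2 V) with hU
    have h1 := card_filter_edges_le G U s (fun e he v hv => by
      rw [hU, Finset.mem_filter]
      exact ⟨Finset.mem_univ _, e, he, hv⟩)
    have h2 := hle U
    have h3 : s.biUnion t = U.sigma fun v => (Finset.univ : Finset (Fin (m v) × Fin k)) := by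
      ext z
      simp [t, hU]
    rw [h3, Finset.card_sigma]
    simp only [Finset.card_univ, Fintype.card_prod, Fintype.card_fin]
    omega)
  have hedge : Fintype.card G.edgeSet = Fintype.card (Σ v, Fin (m v) × Fin k) := by
    apply le_antisymm (Fintype.card_le_of_injective f hfinj)
    simp only [Fintype.card_sigma, Fintype.card_prod, Fintype.card_fin]
    have h1 : (adjPairs G Finset.univ Finset.univ).card ≤ Fintype.card G.Dart := by
      rw [← Fintype.card_coe]
      refine Fintype.card_le_of_injective
        (fun p => (⟨p.1, (mem_adjPairs.1 p.2).2⟩ : G.Dart)) fun p p' h => ?_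
      exact Subtype.ext (congrArg SimpleGraph.Dart.toProd h)
    rw [G.dart_card_eq_twice_card_edges, htot, SimpleGraph.edgeFinset_card] at h1
    omega
  have hbij : Function.Bijective f :=
    (Fintype.bijective_iff_injective_and_card f).2 ⟨hfinj, hedge⟩
  refine hasStarDecomp_of_equiv hk (Equiv.ofBijective f hbij) fun e => ?_
  have := hf e
  simpa [t] using this

end Hall

section Entropy

open Real

theorem entH_le_tangent {a b : ℝ} (ha : 0 < a) (hb : 0 ≤ b) :
    entH b ≤ entH a + (b - a) * (-log a - 1) := by
  unfold entH
  rcases hb.eq_or_lt with rfl | hb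
  · simp only [log_zero]
    nlinarith
  · have h := log_le_sub_one_of_pos (div_pos ha hb)
    rw [log_div ha.ne' hb.ne'] at h
    have h2 := mul_le_mul_of_nonneg_left h hb.le
    have h3 : b * (a / b - 1) = a - b := by field_simp
    rw [h3] at h2
    linarith

/-- The derivative of `2 * entF x t / x` in `t`. -/
noncomputable def entFSlope (x t : ℝ) : ℝ :=
  2 * log ((1 - t) * x) - log (t * x) - log (1 - (2 - t) * x)

theorem entF_le_tangent {x t u : ℝ} (h1 : 0 < t * x) (h2 : 0 < (1 - t) * x)
    (h3 : 0 < 1 - (2 - t) * x) (k1 : 0 ≤ u * x) (k2 : 0 ≤ (1 - u) * x)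
    (k3 : 0 ≤ 1 - (2 - u) * x) :
    entF x u ≤ entF x t + (u - t) * (x / 2) * entFSlope x t := by
  have e1 := entH_le_tangent h1 k1
  have e2 := entH_le_tangent h2 k2
  have e3 := entH_le_tangent h3 k3
  unfold entF entFSlope
  linarith

theorem entF_self {x : ℝ} (h0 : 0 < x) (h1 : x < 1) : entF x x = 0 := by
  have h1' : 0 < 1 - x := by linarith
  unfold entF entHH entH
  rw [show 1 - (2 - x) * x = (1 - x) * (1 - x) by ring, log_mul h0.ne' h0.ne',
    log_mul h1'.ne' h0.ne', log_mul h1'.ne' h1'.ne']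
  ring

theorem rate_eq {d t x : ℝ} (ht0 : 0 < t) (ht1 : t < 1) (hx : 0 < x) :
    d * entF x t + entHH x = x * ((d * t / 2 - 1) * log x + (d / 2 * entH t + d * entH (1 - t)))
      + (d / 2 * entH (1 - (2 - t) * x) - (d - 1) * entH (1 - x)) := by
  have h1' : 0 < 1 - t := by linarith
  unfold entF entHH
  generalize entH (1 - (2 - t) * x) = A
  generalize entH (1 - x) = B
  unfold entH
  rw [log_mul ht0.ne' hx.ne', log_mul h1'.ne' hx.ne']
  ring

theorem log_one_sub_mul_le {d c σ x : ℝ} (hd : 2 ≤ d) (hσ : 0 < σ) (hσ1 : σ < 1)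
    (hcσ : c * σ < 1) (hg : (d - 1) * log (1 - σ) ≤ d / 2 * log (1 - c * σ))
    (hx : 0 < x) (hxσ : x ≤ σ) :
    (d - 1) * log (1 - x) ≤ d / 2 * log (1 - c * x) := by
  have hd0 : 0 < d := by linarith
  set β : ℝ := 2 * (d - 1) / d with hβ
  have hβ1 : 1 ≤ β := by
    rw [hβ, le_div_iff₀ hd0]
    linarith
  have h1σ : 0 < 1 - σ := by linarith
  have h1x : 0 < 1 - x := by linarith
  have key : (1 - σ) ^ β ≤ 1 - c * σ := by
    rw [← log_le_log_iff (rpow_pos_of_pos h1σ _) (by linarith), log_rpow h1σ, hβ,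
      div_mul_eq_mul_div, div_le_iff₀ hd0]
    linarith
  have hw0 : 0 ≤ x / σ := by positivity
  have hw1 : 0 ≤ 1 - x / σ := by
    rw [sub_nonneg, div_le_one hσ]
    exact hxσ
  have hconv := (convexOn_rpow hβ1).2 (x := 1) (y := 1 - σ) (by simp) (by simpa using hσ1.le)
    hw1 hw0 (by ring)
  simp only [smul_eq_mul, one_rpow] at hconv
  have e1 : (1 - x / σ) * 1 + x / σ * (1 - σ) = 1 - x := by field_simp; ring
  have e2 : (1 - x / σ) * 1 + x / σ * (1 - c * σ) = 1 - c * x := by field_simp; ring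
  rw [e1] at hconv
  have h3 : (1 - x) ^ β ≤ 1 - c * x := by
    rw [← e2]
    exact hconv.trans (by gcongr)
  have h4 := log_le_log (rpow_pos_of_pos h1x _) h3
  rw [log_rpow h1x, hβ, div_mul_eq_mul_div, div_le_iff₀ hd0] at h4
  linarith

theorem hasDerivAt_entH_one_sub {c x : ℝ} (h : 0 < 1 - c * x) :
    HasDerivAt (fun y => entH (1 - c * y)) (c * (log (1 - c * x) + 1)) x := by
  have h1 : HasDerivAt (fun y : ℝ => 1 - c * y) (-c) x := by
    simpa using ((hasDerivAt_id x).const_mul c).const_sub 1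
  have h2 := h1.log h.ne'
  have h3 := h1.neg.mul h2
  refine h3.congr_deriv ?_
  simp only [Pi.neg_apply]
  field_simp

/-- If `rate x / x` is increasing then it is largest at the right end point. -/
theorem rate_le_mul {d t σ x : ℝ} (hd : 2 ≤ d) (ht0 : 0 < t) (ht1 : t < 1) (hσ : 0 < σ)
    (hσ1 : σ < 1) (hcσ : (2 - t) * σ < 1)
    (hg : (d - 1) * log (1 - σ) ≤ d / 2 * log (1 - (2 - t) * σ))
    (hx : 0 < x) (hxσ : x ≤ σ) :
    d * entF x t + entHH x ≤ x / σ * (d * entF σ t + entHH σ) := by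
  set χ : ℝ → ℝ := fun y => (d * t / 2 - 1) * log y + (d / 2 * entH t + d * entH (1 - t)) +
    (d / 2 * entH (1 - (2 - t) * y) - (d - 1) * entH (1 - 1 * y)) / y with hχ
  have hrate : ∀ y, 0 < y → d * entF y t + entHH y = y * χ y := by
    intro y hy
    rw [rate_eq ht0 ht1 hy, hχ]
    field_simp
  have hder : ∀ y ∈ Set.Icc x σ, HasDerivAt χ
      ((d / 2 * log (1 - (2 - t) * y) - (d - 1) * log (1 - y)) / y ^ 2) y := by
    intro y hy
    have hy0 : 0 < y := hx.trans_le hy.1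
    have hcy : 0 < 1 - (2 - t) * y := by nlinarith [hy.2]
    have h1y : 0 < 1 - 1 * y := by linarith [hy.2]
    have h1 := ((hasDerivAt_log hy0.ne').const_mul (d * t / 2 - 1)).add_const
      (d / 2 * entH t + d * entH (1 - t))
    have h2 := (((hasDerivAt_entH_one_sub hcy).const_mul (d / 2)).sub
      ((hasDerivAt_entH_one_sub h1y).const_mul (d - 1))).div (hasDerivAt_id y) hy0.ne'
    have h3 := h1.add h2
    refine h3.congr_deriv ?_
    simp only [entH, id, one_mul, Pi.sub_apply]
    field_simp
    ring
  have hmono : MonotoneOn χ (Set.Icc x σ) := by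
    refine monotoneOn_of_deriv_nonneg (convex_Icc x σ)
      (fun y hy => (hder y hy).continuousAt.continuousWithinAt)
      (fun y hy => (hder y (interior_subset hy)).differentiableAt.differentiableWithinAt)
      (fun y hy => ?_)
    have hy' := interior_subset hy
    rw [(hder y hy').deriv]
    have := log_one_sub_mul_le hd hσ hσ1 hcσ hg (hx.trans_le hy'.1) hy'.2
    apply div_nonneg _ (sq_nonneg _)
    linarith
  rw [hrate x hx, hrate σ hσ]
  have := hmono (Set.left_mem_Icc.2 hxσ) (Set.right_mem_Icc.2 hxσ) hxσ
  rw [div_mul_eq_mul_div, mul_div_assoc, mul_div_cancel_left₀ _ hσ.ne']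
  gcongr

theorem log_le_mul_log_of_bernoulli {p y a : ℝ} (hp : 1 ≤ p) (hy : 0 < 1 + y)
    (ha : 0 < a) (h : a ≤ 1 + p * y) : log a ≤ p * log (1 + y) := by
  rw [← log_rpow hy]
  exact log_le_log ha (h.trans (one_add_mul_self_le_rpow_one_add (by linarith) hp))

theorem log_boundary_small {k s ρ : ℝ} (hk : 2 ≤ k) (hρ : 0 < ρ) (hρ1 : ρ < 1)
    (hs : 2 ≤ s ∨ s = 1 ∧ 1 ≤ k * ρ) :
    (k * (s + ρ) - 1) * log (1 - ρ) ≤ k * (s + ρ) * log (s / (s + ρ)) := by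
  have h1ρ : 0 < 1 - ρ := by linarith
  rcases hs with hs | ⟨rfl, hkρ⟩
  · have hs0 : 0 < s := by linarith
    have h1 := one_sub_inv_le_log_of_pos (show 0 < s / (s + ρ) by positivity)
    have h2 := log_le_sub_one_of_pos h1ρ
    have h3 : 1 - (s / (s + ρ))⁻¹ = -(ρ / s) := by field_simp; ring
    rw [h3] at h1
    have hp : 0 < k * (s + ρ) - 1 := by nlinarith
    calc (k * (s + ρ) - 1) * log (1 - ρ) ≤ (k * (s + ρ) - 1) * (-ρ) := by
          gcongr; linarith
      _ ≤ k * (s + ρ) * (-(ρ / s)) := by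
          have : ρ / s ≤ ρ / 2 := by gcongr
          have h4 : k * (s + ρ) * (ρ / s) ≤ k * (s + ρ) * (ρ / 2) := by gcongr
          nlinarith [mul_pos (show 0 < k by linarith) (show 0 < ρ by linarith),
            mul_le_mul hk hs (by norm_num) (by linarith)]
      _ ≤ _ := by gcongr
  · have h1ρ' : 0 < 1 + ρ := by linarith
    rw [log_div one_ne_zero h1ρ'.ne', log_one]
    have hsq : 0 < 1 - ρ ^ 2 := by nlinarith
    have h := log_le_mul_log_of_bernoulli (p := k * (1 + ρ)) (y := ρ ^ 2 / (1 - ρ ^ 2))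
      (a := (1 - ρ)⁻¹) (by nlinarith) (by positivity) (by positivity) (by
        rw [inv_le_iff_one_le_mul₀ h1ρ]
        have : (1 + k * (1 + ρ) * (ρ ^ 2 / (1 - ρ ^ 2))) * (1 - ρ) = 1 - ρ + k * ρ * ρ := by
          rw [show 1 - ρ ^ 2 = (1 - ρ) * (1 + ρ) by ring]
          field_simp
        rw [this]
        nlinarith)
    have h2 : 1 + ρ ^ 2 / (1 - ρ ^ 2) = ((1 - ρ) * (1 + ρ))⁻¹ := by
      rw [show 1 - ρ ^ 2 = (1 - ρ) * (1 + ρ) by ring]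
      field_simp
      ring
    rw [h2, log_inv, log_inv, log_mul h1ρ.ne' h1ρ'.ne'] at h
    linarith

theorem log_boundary_large {k s ρ : ℝ} (hk : 2 ≤ k) (hρ : 0 < ρ) (hρ1 : ρ < 1)
    (hs : 2 ≤ s ∧ 1 ≤ 2 * (k * ρ) ∨ s = 1 ∧ 1 ≤ k * ρ) :
    (k * (s + ρ) - 1) * log ρ ≤ k * (s + ρ) * log ((s - 1 + 2 * ρ) / (s + ρ)) := by
  have h1ρ : 0 < 1 - ρ := by linarith
  rcases hs with ⟨hs, hkρ⟩ | ⟨rfl, hkρ⟩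
  · have hs0 : 0 < s := by linarith
    have hA : 0 < s - 1 + 2 * ρ := by linarith
    have h1 := one_sub_inv_le_log_of_pos (show 0 < (s - 1 + 2 * ρ) / (s + ρ) by positivity)
    have h2 := log_le_sub_one_of_pos hρ
    have h3 : 1 - ((s - 1 + 2 * ρ) / (s + ρ))⁻¹ = -((1 - ρ) / (s - 1 + 2 * ρ)) := by
      field_simp; ring
    rw [h3] at h1
    have hp : 0 < k * (s + ρ) - 1 := by nlinarith
    calc (k * (s + ρ) - 1) * log ρ ≤ (k * (s + ρ) - 1) * (ρ - 1) := by gcongr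
      _ ≤ k * (s + ρ) * (-((1 - ρ) / (s - 1 + 2 * ρ))) := by
          rw [mul_neg, ← mul_div_assoc, le_neg, div_le_iff₀ hA]
          have h5 : k * (s + ρ) ≤ (k * (s + ρ) - 1) * (s - 1 + 2 * ρ) := by
            have h6 : k * (s + ρ) * (s - 2) ≥ 2 * (s - 2) := by
              have : 0 ≤ s - 2 := by linarith
              gcongr
              nlinarith
            nlinarith [mul_le_mul_of_nonneg_right hkρ (show 0 ≤ s + ρ by linarith)]
          nlinarith
      _ ≤ _ := by gcongr
  · have h1ρ' : 0 < 1 + ρ := by linarith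
    have h := log_le_mul_log_of_bernoulli (p := k * (1 + ρ)) (y := (1 - ρ) / (1 + ρ))
      (a := ρ⁻¹) (by nlinarith) (by positivity) (by positivity) (by
        rw [inv_le_iff_one_le_mul₀ hρ]
        have : (1 + k * (1 + ρ) * ((1 - ρ) / (1 + ρ))) * ρ = ρ + k * ρ * (1 - ρ) := by
          field_simp
        rw [this]
        nlinarith)
    have h2 : 1 + (1 - ρ) / (1 + ρ) = 2 / (1 + ρ) := by
      field_simp; ring
    rw [h2, log_inv] at h
    have h3 : (1 - 1 + 2 * ρ) / (1 + ρ) = 2 / (1 + ρ) * ρ := by ring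
    rw [h3, log_mul (by positivity) hρ.ne']
    linarith

/-- For `s = r = 1` the first-moment condition fails. -/
theorem rate_nonneg_of_one {k d : ℝ} (hk : 2 ≤ k) (hd : d = 2 * k + 1) :
    0 ≤ d * entF (1 / (2 * k)) ((d - 2 * k + 1) / d) + entHH (1 / (2 * k)) := by
  have hd0 : 0 < d := by linarith
  set D : ℝ := 2 * k with hD
  have hD4 : 4 ≤ D := by linarith
  have hD0 : 0 < D := by linarith
  have hD1 : 0 < D - 1 := by linarith
  have hD2 : 0 < D + 1 := by linarith
  subst hd
  rw [show D + 1 - D + 1 = 2 by ring]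
  have e1 : 2 / (D + 1) * (1 / D) = 2 / ((D + 1) * D) := by field_simp
  have e2 : (1 - 2 / (D + 1)) * (1 / D) = (D - 1) / ((D + 1) * D) := by field_simp; ring
  have e3 : 1 - (2 - 2 / (D + 1)) * (1 / D) = (D - 1) / (D + 1) := by field_simp; ring
  have e4 : 1 - 1 / D = (D - 1) / D := by field_simp
  unfold entF entHH entH
  rw [e1, e2, e3, e4, log_div two_ne_zero (by positivity), log_div hD1.ne' (by positivity),
    log_div hD1.ne' hD2.ne', log_div one_ne_zero hD0.ne', log_div hD1.ne' hD0.ne',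
    log_mul hD2.ne' hD0.ne', log_one]
  have h1 := one_sub_inv_le_log_of_pos (show 0 < (D + 1) / D by positivity)
  have h2 := one_sub_inv_le_log_of_pos (show 0 < (D - 1) / D by positivity)
  rw [log_div hD2.ne' hD0.ne', inv_div] at h1
  rw [log_div hD1.ne' hD0.ne', inv_div] at h2
  have h3 : log 2 ≤ log D := log_le_log (by norm_num) (by linarith)
  generalize log (D + 1) = a at *
  generalize log (D - 1) = e at *
  generalize log D = b at *
  generalize log 2 = l at *
  have h4 : 0 ≤ (D + 1) / 2 * (a - b - (1 - D / (D + 1))) +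
      (D - 1) * (1 / 2 - 1 / D) * (e - b - (1 - D / (D - 1))) + (b - l) / D + 1 / D := by
    have : 0 ≤ 1 / 2 - 1 / D := by
      rw [sub_nonneg]
      exact one_div_le_one_div_of_le (by norm_num) (by linarith)
    have h5 : 0 ≤ (D + 1) / 2 * (a - b - (1 - D / (D + 1))) :=
      mul_nonneg (by linarith) (by linarith)
    have h6 : 0 ≤ (D - 1) * (1 / 2 - 1 / D) * (e - b - (1 - D / (D - 1))) :=
      mul_nonneg (mul_nonneg hD1.le this) (by linarith)
    have h7 : 0 ≤ (b - l) / D := div_nonneg (by linarith) hD0.le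
    positivity
  refine h4.trans_eq ?_
  field_simp
  ring

end Entropy

section Counting

open Real

variable {V : Type*} [Fintype V]

open Classical in
/-- The `d`-regular graphs on `V`. -/
noncomputable def regularGraphs (V : Type*) [Fintype V] (d : ℕ) : Finset (SimpleGraph V) :=
  Finset.univ.filter fun G => IsRegularGraph G d

theorem card_regularWith_le (d q : ℕ) (W : Finset V) :
    (regularWith d W q).card ≤ (regularGraphs V d).card := by
  classical
  refine Finset.card_le_card fun G hG => ?_
  simpa [regularGraphs] using (mem_regularWith.1 hG).1

theorem card_regularWith_eq_zero {d q : ℕ} {W : Finset V} (h : d * W.card < q) :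
    (regularWith d W q).card = 0 := by
  classical
  rw [Finset.card_eq_zero, Finset.eq_empty_iff_forall_notMem]
  intro G hG
  have h1 := (card_adjPairs_bipartition hG).1
  have h2 : (0 : ℝ) ≤ (adjPairs G W Wᶜ).card := by positivity
  have h3 : ((d * W.card : ℕ) : ℝ) < q := by exact_mod_cast h
  push_cast at h3
  linarith

theorem card_regularWith_small_step {d q : ℕ} {W : Finset V} (hd : 0 < d)
    (hN : 4 * W.card + 4 * d ≤ Fintype.card V) :
    ((regularWith d W (q + 2)).card : ℝ) * ((q + 2) * Fintype.card V) ≤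
      (regularWith d W q).card * (2 * d * W.card ^ 2) := by
  have h := card_regularWith_add_two d q W
  have hN' : 4 * (W.card : ℝ) + 4 * d ≤ Fintype.card V := by exact_mod_cast hN
  set N : ℝ := (Fintype.card V : ℝ)
  set n : ℝ := (W.card : ℝ) with hn
  have hd' : (0 : ℝ) < d := by exact_mod_cast hd
  have hq : (0 : ℝ) ≤ q := by positivity
  have h1 : ((regularWith d W q).card : ℝ) * (d * n - q) ^ 2 ≤
      (regularWith d W q).card * (d * n) ^ 2 := by
    rcases Nat.lt_or_ge (d * W.card) q with hlt | hge
    · rw [card_regularWith_eq_zero hlt]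
      simp
    · have : (q : ℝ) ≤ d * n := by rw [hn]; exact_mod_cast hge
      gcongr
      · linarith
  have h2 : ((regularWith d W (q + 2)).card : ℝ) * ((q + 2) * (d * N / 2)) ≤
      (regularWith d W (q + 2)).card *
        ((q + 2) * (d * N - 2 * d * n + (q + 2) - 2 * d ^ 2)) := by
    gcongr
    nlinarith
  have h3 := h2.trans (h.trans h1)
  refine le_of_mul_le_mul_right ?_ (show (0 : ℝ) < d / 2 by positivity)
  calc _ = ((regularWith d W (q + 2)).card : ℝ) * ((q + 2) * (d * N / 2)) := by ring
    _ ≤ _ := h3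
    _ = _ := by ring

theorem card_regularWith_small_iterate {d : ℕ} (p j : ℕ) {W : Finset V} (hd : 0 < d)
    (hN : 4 * W.card + 4 * d ≤ Fintype.card V) :
    ((regularWith d W (p + 2 * j)).card : ℝ) * ((Fintype.card V : ℝ) ^ j * j.factorial) ≤
      (regularGraphs V d).card * (d * W.card ^ 2 : ℝ) ^ j := by
  induction j with
  | zero => simpa using card_regularWith_le d p W
  | succ j ih =>
    have h := card_regularWith_small_step (q := p + 2 * j) hd hN
    rw [show p + 2 * (j + 1) = p + 2 * j + 2 by ring, Nat.factorial_succ]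
    push_cast at h ⊢
    set A : ℝ := ((regularWith d W (p + 2 * j + 2)).card : ℝ)
    set B : ℝ := ((regularWith d W (p + 2 * j)).card : ℝ)
    set N : ℝ := (Fintype.card V : ℝ)
    have h1 : A * ((j + 1) * N) ≤ B * (d * W.card ^ 2) := by
      have : A * (2 * (j + 1) * N) ≤ A * ((p + 2 * j + 2) * N) := by
        gcongr
        have : (0 : ℝ) ≤ p := by positivity
        linarith
      linarith
    calc A * (N ^ (j + 1) * ((j + 1) * j.factorial))
        = A * ((j + 1) * N) * (N ^ j * j.factorial) := by ring
      _ ≤ B * (d * W.card ^ 2) * (N ^ j * j.factorial) := by gcongr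
      _ = B * (N ^ j * j.factorial) * (d * W.card ^ 2) := by ring
      _ ≤ ((regularGraphs V d).card * (d * W.card ^ 2 : ℝ) ^ j) * (d * W.card ^ 2) := by gcongr
      _ = _ := by ring

theorem pow_le_three_pow_mul_factorial (j : ℕ) : (j : ℝ) ^ j ≤ 3 ^ j * j.factorial := by
  have h := pow_div_factorial_le_exp (j : ℝ) (by positivity) j
  rw [div_le_iff₀ (by positivity)] at h
  refine h.trans ?_
  rw [← exp_one_pow]
  gcongr
  linarith [exp_one_lt_d9]

theorem card_regularWith_small {d q : ℕ} {W : Finset V} (hd : 0 < d) (hW : 0 < W.card)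
    (hN : 4 * W.card + 4 * d ≤ Fintype.card V) (hN2 : 2 * d * W.card ≤ Fintype.card V)
    (hq : 4 * W.card ≤ q) :
    ((regularWith d W q).card : ℝ) ≤
      (regularGraphs V d).card * (2 * d * W.card / Fintype.card V : ℝ) ^ (2 * W.card) := by
  obtain ⟨j, p, hjp⟩ : ∃ j p, q = p + 2 * j ∧ 2 * W.card ≤ j :=
    ⟨q / 2, q % 2, by omega, by omega⟩
  obtain ⟨rfl, hj⟩ := hjp
  have h := card_regularWith_small_iterate p j hd hN
  have hf := pow_le_three_pow_mul_factorial j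
  have hN0 : (0 : ℝ) < Fintype.card V := by
    have : 0 < Fintype.card V := by omega
    exact_mod_cast this
  have hn0 : (0 : ℝ) < W.card := by exact_mod_cast hW
  have hN2' : 2 * d * W.card ≤ (Fintype.card V : ℝ) := by exact_mod_cast hN2
  have hj' : 2 * (W.card : ℝ) ≤ j := by exact_mod_cast hj
  set A : ℝ := ((regularWith d W (p + 2 * j)).card : ℝ)
  set N : ℝ := (Fintype.card V : ℝ)
  set n : ℝ := (W.card : ℝ)
  set T : ℝ := ((regularGraphs V d).card : ℝ)
  have hj0 : (0 : ℝ) < j := by linarith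
  have hd' : (0 : ℝ) < d := by exact_mod_cast hd
  have h1 : A * (N * j) ^ j ≤ T * (3 * d * n ^ 2) ^ j := by
    calc A * (N * j) ^ j = A * N ^ j * (j : ℝ) ^ j := by ring
      _ ≤ A * N ^ j * (3 ^ j * j.factorial) := by gcongr
      _ = 3 ^ j * (A * (N ^ j * j.factorial)) := by ring
      _ ≤ 3 ^ j * (T * (d * n ^ 2) ^ j) := by gcongr
      _ = T * (3 * d * n ^ 2) ^ j := by rw [mul_assoc 3, mul_pow 3]; ring
  have h2 : A ≤ T * (3 * d * n ^ 2 / (N * j)) ^ j := by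
    rw [div_pow, ← mul_div_assoc, le_div_iff₀ (by positivity)]
    exact h1
  refine h2.trans ?_
  have h3 : 3 * d * n ^ 2 / (N * j) ≤ 2 * d * n / N := by
    rw [div_le_div_iff₀ (by positivity) hN0]
    have : 3 * n ≤ 2 * (j : ℝ) := by linarith
    calc 3 * d * n ^ 2 * N = (d * n * N) * (3 * n) := by ring
      _ ≤ (d * n * N) * (2 * j) := by gcongr
      _ = _ := by ring
  calc T * (3 * d * n ^ 2 / (N * j)) ^ j ≤ T * (2 * d * n / N) ^ j := by gcongr
    _ ≤ T * (2 * d * n / N) ^ (2 * W.card) := by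
      gcongr T * ?_
      refine pow_le_pow_of_le_one (by positivity) ?_ hj
      rw [div_le_one hN0]
      exact hN2'

theorem entFSlope_eq {D n N q : ℝ} (hD : 0 < D) (hn : 0 < n) (hN : 0 < N) (hq : 0 < q)
    (hqn : q < D * n) (hE : 0 < D * N - 2 * D * n + q) :
    entFSlope (n / N) (q / (D * n)) =
      log ((D * n - q) ^ 2 / (q * (D * N - 2 * D * n + q))) := by
  have h0 : 0 < D * n - q := by linarith
  have e1 : (1 - q / (D * n)) * (n / N) = (D * n - q) / (D * N) := by field_simp
  have e2 : q / (D * n) * (n / N) = q / (D * N) := by field_simp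
  have e3 : 1 - (2 - q / (D * n)) * (n / N) = (D * N - 2 * D * n + q) / (D * N) := by
    field_simp
    ring
  unfold entFSlope
  rw [e1, e2, e3, log_div h0.ne' (by positivity), log_div hq.ne' (by positivity),
    log_div hE.ne' (by positivity), log_div (by positivity) (by positivity), log_pow,
    log_mul hq.ne' hE.ne']
  push_cast
  ring

theorem entFSlope_nonpos {x t : ℝ} (hx0 : 0 < x) (hx1 : x < 1) (ht : x ≤ t) (ht1 : t < 1) :
    entFSlope x t ≤ 0 := by
  have h1 : 0 < (1 - t) * x := mul_pos (by linarith) hx0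
  have h2 : 0 < t * x := mul_pos (by linarith) hx0
  have h3 : 0 < 1 - (2 - t) * x := by
    nlinarith [mul_pos (sub_pos.2 hx1) (sub_pos.2 hx1)]
  have h : ((1 - t) * x) ^ 2 ≤ t * x * (1 - (2 - t) * x) := by nlinarith
  have h4 := log_le_log (by positivity) h
  rw [log_pow, log_mul h2.ne' h3.ne'] at h4
  unfold entFSlope
  push_cast at h4
  linarith

theorem entF_le_of_le {x t u : ℝ} (hx0 : 0 < x) (hx1 : x < 1) (ht : x ≤ t) (ht1 : t < 1)
    (htu : t ≤ u) (hu : u ≤ 1) : entF x u ≤ entF x t := by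
  have hE : ∀ v, x ≤ v → 0 < 1 - (2 - v) * x := fun v hv => by
    nlinarith [mul_pos (sub_pos.2 hx1) (sub_pos.2 hx1)]
  have h := entF_le_tangent (x := x) (t := t) (u := u) (mul_pos (by linarith) hx0)
    (mul_pos (by linarith) hx0) (hE t ht) (mul_nonneg (by linarith) hx0.le)
    (mul_nonneg (by linarith) hx0.le) (hE u (ht.trans htu)).le
  have h2 := mul_nonpos_of_nonneg_of_nonpos
    (mul_nonneg (sub_nonneg.2 htu) (half_pos hx0).le) (entFSlope_nonpos hx0 hx1 ht ht1)
  linarith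

theorem card_regularWith_large_step {d q : ℕ} {W : Finset V} {c : ℝ} (hd : 0 < d)
    (hW : 0 < W.card) (hc : 0 < c) (hWc : c ≤ (1 - W.card / Fintype.card V : ℝ) ^ 2)
    (hN : 4 * d ≤ c * Fintype.card V)
    (hq : (d * W.card : ℝ) * (W.card / Fintype.card V) ≤ q) (hqn : q < d * W.card) :
    ((regularWith d W (q + 2)).card : ℝ) ≤ (regularWith d W q).card *
      exp (entFSlope (W.card / Fintype.card V) (q / (d * W.card)) +
        4 * d / (c * Fintype.card V)) := by
  have h := card_regularWith_add_two d q W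
  have hd' : (0 : ℝ) < d := by exact_mod_cast hd
  have hn0 : (0 : ℝ) < W.card := by exact_mod_cast hW
  have hN0 : (0 : ℝ) < Fintype.card V := by
    have := Finset.card_le_univ W
    exact_mod_cast hW.trans_le this
  have hqn' : (q : ℝ) < d * W.card := by exact_mod_cast hqn
  set N : ℝ := (Fintype.card V : ℝ)
  set n : ℝ := (W.card : ℝ)
  set A : ℝ := ((regularWith d W (q + 2)).card : ℝ)
  set B : ℝ := ((regularWith d W q).card : ℝ)
  set E : ℝ := d * N - 2 * d * n + q with hE
  have hq0 : (0 : ℝ) < q := lt_of_lt_of_le (by positivity) hq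
  have hEc : d * (c * N) ≤ E := by
    have : d * N * c ≤ d * N * (1 - n / N) ^ 2 := by gcongr
    have h2 : d * N * (1 - n / N) ^ 2 = d * N - 2 * d * n + d * n * (n / N) := by
      field_simp; ring
    linarith
  have hcN : 0 < c * N := by positivity
  have hE4 : 4 * (d : ℝ) ^ 2 ≤ E := by nlinarith
  have hE0 : 0 < E := lt_of_lt_of_le (by positivity) hE4
  rw [exp_add, entFSlope_eq hd' hn0 hN0 hq0 hqn' hE0, exp_log (div_pos (by
    have : (0 : ℝ) < d * n - q := by linarith
    positivity) (by positivity))]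
  have hκ : 1 + 4 * (d : ℝ) ^ 2 / E ≤ exp (4 * d / (c * N)) := by
    refine le_trans ?_ (add_one_le_exp _)
    have : 4 * (d : ℝ) ^ 2 / E ≤ 4 * d / (c * N) := by
      rw [div_le_div_iff₀ hE0 hcN]
      nlinarith
    linarith
  have hkey : E ≤ (E - 2 * d ^ 2) * (1 + 4 * (d : ℝ) ^ 2 / E) := by
    have : (E - 2 * d ^ 2) * (1 + 4 * (d : ℝ) ^ 2 / E) - E =
        2 * (d : ℝ) ^ 2 * (E - 4 * d ^ 2) / E := by field_simp; ring
    have h2 : 0 ≤ 2 * (d : ℝ) ^ 2 * (E - 4 * d ^ 2) / E := by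
      have : 0 ≤ E - 4 * d ^ 2 := by linarith
      positivity
    linarith
  have hA : A * (q * (E - 2 * d ^ 2)) ≤ B * (d * n - q) ^ 2 := by
    refine le_trans ?_ h
    have h0 : 0 ≤ E - 2 * d ^ 2 := by nlinarith
    have : d * N - 2 * d * n + ((q : ℝ) + 2) - 2 * d ^ 2 = (E - 2 * d ^ 2) + 2 := by
      rw [hE]; ring
    rw [this]
    gcongr <;> linarith
  have h0 : 0 ≤ A := by positivity
  have hfin : A * (q * E) ≤ B * (d * n - q) ^ 2 * exp (4 * d / (c * N)) := by
    calc A * (q * E) ≤ A * (q * ((E - 2 * d ^ 2) * (1 + 4 * (d : ℝ) ^ 2 / E))) := by gcongr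
      _ = A * (q * (E - 2 * d ^ 2)) * (1 + 4 * (d : ℝ) ^ 2 / E) := by ring
      _ ≤ B * (d * n - q) ^ 2 * exp (4 * d / (c * N)) := by gcongr
  rw [show B * ((d * n - q) ^ 2 / (q * E) * exp (4 * d / (c * N))) =
    B * (d * n - q) ^ 2 * exp (4 * d / (c * N)) / (q * E) by ring, le_div_iff₀ (by positivity)]
  exact hfin

theorem card_regularWith_large_iterate {d : ℕ} {W : Finset V} {c : ℝ} (hd : 0 < d)
    (hW : 0 < W.card) (hc : 0 < c) (hWN : W.card < Fintype.card V)
    (hWc : c ≤ (1 - W.card / Fintype.card V : ℝ) ^ 2)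
    (hN : 4 * d ≤ c * Fintype.card V) (q : ℕ)
    (hq : (d * W.card : ℝ) * (W.card / Fintype.card V) ≤ q) :
    ((regularWith d W (q + 2)).card : ℝ) ≤ (regularGraphs V d).card *
      exp (Fintype.card V * d * entF (W.card / Fintype.card V) (q / (d * W.card)) +
        4 * d / (c * Fintype.card V) * (q + 2)) := by
  induction q using Nat.strong_induction_on with
  | _ q ih =>
  rcases Nat.lt_or_ge (d * W.card) (q + 2) with hlt | hge
  · rw [card_regularWith_eq_zero hlt]
    push_cast
    positivity
  have hqn : q < d * W.card := by omega
  have hstep := card_regularWith_large_step hd hW hc hWc hN hq hqn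
  have hd' : (0 : ℝ) < d := by exact_mod_cast hd
  have hn0 : (0 : ℝ) < W.card := by exact_mod_cast hW
  have hnN : (W.card : ℝ) < Fintype.card V := by exact_mod_cast hWN
  have hN0 : (0 : ℝ) < Fintype.card V := hn0.trans hnN
  have hqn' : (q : ℝ) < d * W.card := by exact_mod_cast hqn
  have hmono : ((regularWith d W q).card : ℝ) ≤ (regularGraphs V d).card := by
    exact_mod_cast card_regularWith_le d q W
  set N : ℝ := (Fintype.card V : ℝ)
  set n : ℝ := (W.card : ℝ)
  set T : ℝ := ((regularGraphs V d).card : ℝ)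
  set κ : ℝ := 4 * d / (c * N)
  have hκ : 0 ≤ κ := by positivity
  set x : ℝ := n / N with hx
  have hx0 : 0 < x := by positivity
  have hx1 : x < 1 := by rw [hx, div_lt_one hN0]; exact hnN
  have hxu : x ≤ q / (d * n) := by
    rw [le_div_iff₀ (by positivity)]
    linarith
  have hu1 : q / (d * n) < 1 := by
    rw [div_lt_one (by positivity)]
    exact hqn'
  have hE : ∀ v, x ≤ v → 0 < 1 - (2 - v) * x := fun v hv => by
    nlinarith [mul_pos (sub_pos.2 hx1) (sub_pos.2 hx1)]
  have htan : ∀ v, x ≤ v → v ≤ 1 → N * d * entF x v ≤ N * d * entF x (q / (d * n)) +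
      (v * (d * n) - q) / 2 * entFSlope x (q / (d * n)) := by
    intro v hv hv1
    have h1 := entF_le_tangent (x := x) (t := q / (d * n)) (u := v)
      (mul_pos (hx0.trans_le hxu) hx0) (mul_pos (by linarith) hx0) (hE _ hxu)
      (mul_nonneg (hx0.le.trans hv) hx0.le) (mul_nonneg (by linarith) hx0.le) (hE v hv).le
    have h2 := mul_le_mul_of_nonneg_left h1 (show 0 ≤ N * d by positivity)
    refine h2.trans_eq ?_
    rw [mul_add]
    congr 1
    rw [hx]
    field_simp
  have hslope := entFSlope_nonpos hx0 hx1 hxu hu1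
  set S : ℝ := entFSlope x (q / (d * n))
  rcases lt_or_ge ((q : ℝ) - 2) (d * n * x) with hlt2 | hge2
  · have h1 := htan x le_rfl hx1.le
    rw [entF_self hx0 hx1, mul_zero] at h1
    have h2 : S ≤ N * d * entF x (q / (d * n)) := by nlinarith
    refine hstep.trans ?_
    gcongr
    nlinarith [show (0 : ℝ) ≤ q by positivity]
  · have hq2 : 2 ≤ q := by
      have : (0 : ℝ) < (q : ℝ) - 2 := lt_of_lt_of_le (by positivity) hge2
      have : (2 : ℝ) < q := by linarith
      exact_mod_cast this.le
    obtain ⟨q₀, rfl⟩ : ∃ q₀, q = q₀ + 2 := ⟨q - 2, by omega⟩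
    push_cast at *
    have ih' := ih q₀ (by omega) (by linarith)
    have h1 := htan (q₀ / (d * n)) (by
        rw [le_div_iff₀ (by positivity)]
        linarith) (by
        rw [div_le_one (by positivity)]
        linarith)
    rw [div_mul_cancel₀ _ (by positivity)] at h1
    refine hstep.trans ?_
    calc _ ≤ T * exp (N * d * entF x (q₀ / (d * n)) + κ * (q₀ + 2)) * exp (S + κ) := by
          gcongr
      _ = T * exp (N * d * entF x (q₀ / (d * n)) + κ * (q₀ + 2) + (S + κ)) := by
          rw [exp_add _ (S + κ)]; ring
      _ ≤ _ := by
          refine mul_le_mul_of_nonneg_left (exp_le_exp.2 ?_) (Nat.cast_nonneg _)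
          linarith

theorem card_regularWith_large {d q τ : ℕ} {W : Finset V} {c : ℝ} (hd : 0 < d)
    (hW : 0 < W.card) (hc : 0 < c) (hWN : W.card < Fintype.card V)
    (hWc : c ≤ (1 - W.card / Fintype.card V : ℝ) ^ 2)
    (hN : 4 * d ≤ c * Fintype.card V) (hτ : 2 * τ < d)
    (hτW : (W.card : ℝ) / Fintype.card V ≤ 2 * τ / d) (hq : 2 * τ * W.card + 2 ≤ q) :
    ((regularWith d W q).card : ℝ) ≤ (regularGraphs V d).card * (exp (4 * d ^ 2 / c) *
      exp (Fintype.card V * (d * entF (W.card / Fintype.card V) (2 * τ / d)))) := by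
  obtain ⟨q, rfl⟩ : ∃ q₀, q = q₀ + 2 := ⟨q - 2, by omega⟩
  rcases Nat.lt_or_ge (d * W.card) (q + 2) with hlt | hge
  · rw [card_regularWith_eq_zero hlt]
    push_cast
    positivity
  have hq' : 2 * τ * (W.card : ℝ) ≤ q := by exact_mod_cast (by omega : 2 * τ * W.card ≤ q)
  have hd' : (0 : ℝ) < d := by exact_mod_cast hd
  have hn0 : (0 : ℝ) < W.card := by exact_mod_cast hW
  have hnN : (W.card : ℝ) < Fintype.card V := by exact_mod_cast hWN
  have hN0 : (0 : ℝ) < Fintype.card V := hn0.trans hnN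
  have hge' : (q : ℝ) + 2 ≤ d * W.card := by exact_mod_cast hge
  have hτ' : 2 * (τ : ℝ) < d := by exact_mod_cast hτ
  have hqx : (d * W.card : ℝ) * (W.card / Fintype.card V) ≤ q := by
    refine le_trans ?_ hq'
    rw [le_div_iff₀ hd'] at hτW
    nlinarith
  refine (card_regularWith_large_iterate hd hW hc hWN hWc hN q hqx).trans ?_
  rw [← exp_add]
  refine mul_le_mul_of_nonneg_left (exp_le_exp.2 ?_) (Nat.cast_nonneg _)
  have h1 : entF ((W.card : ℝ) / Fintype.card V) (q / (d * W.card)) ≤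
      entF ((W.card : ℝ) / Fintype.card V) (2 * τ / d) := by
    refine entF_le_of_le (by positivity) (by rwa [div_lt_one hN0]) hτW
      (by rwa [div_lt_one hd']) ?_ ?_
    · rw [div_le_div_iff₀ hd' (by positivity)]
      nlinarith
    · rw [div_le_one (by positivity)]
      linarith
  have h2 : 4 * d / (c * Fintype.card V) * ((q : ℝ) + 2) ≤ 4 * d ^ 2 / c := by
    calc 4 * d / (c * Fintype.card V) * ((q : ℝ) + 2)
        ≤ 4 * d / (c * Fintype.card V) * (d * Fintype.card V) := by
          gcongr
          nlinarith
      _ = _ := by field_simp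
  have h3 : (Fintype.card V : ℝ) * d * entF ((W.card : ℝ) / Fintype.card V) (q / (d * W.card)) ≤
      Fintype.card V * (d * entF ((W.card : ℝ) / Fintype.card V) (2 * τ / d)) := by
    rw [mul_assoc]
    gcongr
  linarith

theorem choose_le_exp_entHH {N n : ℕ} (hn : 0 < n) (hnN : n < N) :
    (N.choose n : ℝ) ≤ exp (N * entHH (n / N)) := by
  have hn0 : (0 : ℝ) < n := by exact_mod_cast hn
  have hnN' : (n : ℝ) < N := by exact_mod_cast hnN
  have hN0 : (0 : ℝ) < N := hn0.trans hnN'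
  set x : ℝ := n / N with hx
  have hx0 : 0 < x := by positivity
  have hx1 : 0 < 1 - x := by
    rw [sub_pos, hx, div_lt_one hN0]
    exact hnN'
  have h1 : x ^ n * (1 - x) ^ (N - n) * (N.choose n : ℝ) ≤ 1 := by
    have h := add_pow x (1 - x) N
    rw [add_sub_cancel, one_pow] at h
    refine le_trans ?_ h.ge
    exact Finset.single_le_sum (f := fun m => x ^ m * (1 - x) ^ (N - m) * (N.choose m : ℝ))
      (fun m _ => by positivity) (Finset.mem_range.2 (by omega : n < N + 1))
  have h2 : exp (N * entHH x) * (x ^ n * (1 - x) ^ (N - n)) = 1 := by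
    rw [← rpow_natCast, ← rpow_natCast, rpow_def_of_pos hx0, rpow_def_of_pos hx1, ← exp_add,
      ← exp_add, exp_eq_one_iff, Nat.cast_sub hnN.le]
    unfold entHH entH
    have : (n : ℝ) = N * x := by rw [hx]; field_simp
    rw [this]
    ring
  have h3 : 0 < x ^ n * (1 - x) ^ (N - n) := by positivity
  refine le_of_mul_le_mul_right ?_ h3
  rw [h2]
  linarith

theorem choose_le_three_mul_pow {N n : ℕ} (hn : 0 < n) :
    (N.choose n : ℝ) ≤ (3 * N / n : ℝ) ^ n := by
  have hn0 : (0 : ℝ) < n := by exact_mod_cast hn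
  have h := Nat.choose_le_pow_div (α := ℝ) n N
  refine h.trans ?_
  rw [div_pow, div_le_div_iff₀ (by positivity) (by positivity), mul_pow]
  calc (N : ℝ) ^ n * n ^ n ≤ N ^ n * (3 ^ n * n.factorial) := by
        gcongr
        exact pow_le_three_pow_mul_factorial n
    _ = _ := by ring

end Counting

section Dense

open Real Filter Topology

variable {V : Type*} [Fintype V]

open Classical in
/-- The `d`-regular graphs in which `W` spans more than `τ * W.card` edges. -/
noncomputable def denseOn (d τ : ℕ) (W : Finset V) : Finset (SimpleGraph V) :=
  (regularGraphs V d).filter fun G => 2 * τ * W.card + 2 ≤ (adjPairs G W W).card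

theorem card_denseOn_le {d τ : ℕ} {W : Finset V} {B : ℝ}
    (hB : ∀ q, 2 * τ * W.card + 2 ≤ q → ((regularWith d W q).card : ℝ) ≤ B) :
    ((denseOn d τ W).card : ℝ) ≤ (d * W.card + 1) * B := by
  classical
  have hB0 : 0 ≤ B := (Nat.cast_nonneg _).trans (hB _ le_rfl)
  have hsub : denseOn d τ W ⊆ ((Finset.range (d * W.card + 1)).filter
      (fun q => 2 * τ * W.card + 2 ≤ q)).biUnion fun q => regularWith d W q := by
    intro G hG
    rw [denseOn, Finset.mem_filter, regularGraphs, Finset.mem_filter] at hG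
    rw [Finset.mem_biUnion]
    refine ⟨(adjPairs G W W).card, ?_, mem_regularWith.2 ⟨hG.1.2, rfl⟩⟩
    have := card_adjPairs_add_compl hG.1.2 W W
    rw [Finset.mem_filter, Finset.mem_range]
    exact ⟨by omega, hG.2⟩
  calc ((denseOn d τ W).card : ℝ)
      ≤ ∑ q ∈ (Finset.range (d * W.card + 1)).filter (fun q => 2 * τ * W.card + 2 ≤ q),
          ((regularWith d W q).card : ℝ) := by
        exact_mod_cast (Finset.card_le_card hsub).trans Finset.card_biUnion_le
    _ ≤ ((Finset.range (d * W.card + 1)).filter (fun q => 2 * τ * W.card + 2 ≤ q)).card • B :=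
        Finset.sum_le_card_nsmul _ _ _ fun q hq => hB q (Finset.mem_filter.1 hq).2
    _ ≤ (d * W.card + 1) * B := by
        rw [nsmul_eq_mul]
        gcongr
        have := (Finset.card_filter_le (Finset.range (d * W.card + 1))
          (fun q => 2 * τ * W.card + 2 ≤ q)).trans_eq (Finset.card_range _)
        exact_mod_cast this

theorem denseOn_empty (d τ : ℕ) : denseOn d τ (∅ : Finset V) = ∅ := by
  classical
  refine Finset.filter_eq_empty_iff.2 fun G _ => ?_
  simp [adjPairs]

open Classical in
/-- The `d`-regular graphs in which some set `W` of at most `σ * card V` vertices spans more than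
`τ * W.card` edges. -/
noncomputable def denseGraphs (V : Type*) [Fintype V] (d τ : ℕ) (σ : ℝ) :
    Finset (SimpleGraph V) :=
  (regularGraphs V d).filter fun G =>
    ∃ W : Finset V, (W.card : ℝ) ≤ σ * Fintype.card V ∧ G ∈ denseOn d τ W

theorem card_denseGraphs_le {d τ : ℕ} {σ : ℝ} {u : ℕ → ℝ} (hu0 : ∀ n, 0 ≤ u n)
    (hu : ∀ W : Finset V, 0 < W.card → (W.card : ℝ) ≤ σ * Fintype.card V →
      ((Fintype.card V).choose W.card : ℝ) * (denseOn d τ W).card ≤ u W.card) :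
    ((denseGraphs V d τ σ).card : ℝ) ≤ ∑ n ∈ Finset.range (Fintype.card V + 1), u n := by
  classical
  have hsub : denseGraphs V d τ σ ⊆ ((Finset.univ : Finset V).powerset.filter
      fun W => (W.card : ℝ) ≤ σ * Fintype.card V).biUnion fun W => denseOn d τ W := by
    intro G hG
    obtain ⟨-, W, hW, hGW⟩ := Finset.mem_filter.1 hG
    exact Finset.mem_biUnion.2 ⟨W, Finset.mem_filter.2 ⟨by simp, hW⟩, hGW⟩
  have hchoose : ∀ n, n ≤ Fintype.card V → (0 : ℝ) < (Fintype.card V).choose n := fun n hn => by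
    exact_mod_cast Nat.choose_pos hn
  calc ((denseGraphs V d τ σ).card : ℝ)
      ≤ ∑ W ∈ (Finset.univ : Finset V).powerset.filter
          fun W => (W.card : ℝ) ≤ σ * Fintype.card V, ((denseOn d τ W).card : ℝ) := by
        exact_mod_cast (Finset.card_le_card hsub).trans Finset.card_biUnion_le
    _ ≤ ∑ W ∈ (Finset.univ : Finset V).powerset.filter
          fun W => (W.card : ℝ) ≤ σ * Fintype.card V,
          u W.card / (Fintype.card V).choose W.card := by
        refine Finset.sum_le_sum fun W hW => ?_
        rw [le_div_iff₀' (hchoose _ (Finset.card_le_univ W))]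
        rcases W.eq_empty_or_nonempty with rfl | hne
        · simpa [denseOn_empty] using hu0 0
        · exact hu W hne.card_pos (Finset.mem_filter.1 hW).2
    _ ≤ ∑ W ∈ (Finset.univ : Finset V).powerset, u W.card / (Fintype.card V).choose W.card :=
        Finset.sum_le_sum_of_subset_of_nonneg (Finset.filter_subset _ _) fun W _ _ =>
          div_nonneg (hu0 _) (Nat.cast_nonneg _)
    _ = ∑ n ∈ Finset.range (Fintype.card V + 1), u n := by
        rw [Finset.sum_powerset_apply_card (fun n => u n / (Fintype.card V).choose n)]
        refine Finset.sum_congr rfl fun n hn => ?_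
        rw [Finset.mem_range] at hn
        rw [Finset.card_univ, nsmul_eq_mul, mul_div_cancel₀ _ (hchoose n (by omega)).ne']

theorem choose_mul_card_denseOn_small {d τ : ℕ} {W : Finset V} (hd : 0 < d) (hτ : 2 ≤ τ)
    (hW : 0 < W.card) (hN : 8 * d ≤ Fintype.card V)
    (hWN : 24 * d ^ 2 * (d + 1) * W.card ≤ Fintype.card V) :
    ((Fintype.card V).choose W.card : ℝ) * (denseOn d τ W).card ≤
      (regularGraphs V d).card *
        (24 * d ^ 2 * (d + 1) / Fintype.card V * (W.card * (1 / 2) ^ W.card)) := by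
  have h1 : 1 ≤ d ^ 2 * (d + 1) := Nat.one_le_iff_ne_zero.2 (by positivity)
  have h2 : d ≤ d ^ 2 * (d + 1) := by nlinarith
  have hB := card_denseOn_le (d := d) (τ := τ) (W := W) fun q hq => card_regularWith_small hd hW
    (by nlinarith) (by nlinarith) (show 4 * W.card ≤ q by nlinarith)
  have hc := choose_le_three_mul_pow (N := Fintype.card V) hW
  have hd0 : (0 : ℝ) < d := by exact_mod_cast hd
  have hbern : (d * W.card + 1 : ℝ) ≤ (1 + d) ^ W.card := by
    have := one_add_mul_le_pow (show (-2 : ℝ) ≤ d by linarith) W.card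
    linarith
  have hn0 : (0 : ℝ) < W.card := by exact_mod_cast hW
  have hWN' : 24 * d ^ 2 * (d + 1) * W.card ≤ (Fintype.card V : ℝ) := by exact_mod_cast hWN
  obtain ⟨m, hm⟩ : ∃ m, W.card = m + 1 := ⟨W.card - 1, by omega⟩
  set N : ℝ := (Fintype.card V : ℝ)
  have hN0 : 0 < N := lt_of_lt_of_le (by positivity) hWN'
  set n : ℝ := (W.card : ℝ)
  set T : ℝ := ((regularGraphs V d).card : ℝ)
  set y : ℝ := 12 * d ^ 2 * (d + 1) * n / N with hy
  have hy2 : y ≤ 1 / 2 := by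
    rw [hy, div_le_iff₀ hN0]
    linarith
  have hy0 : 0 ≤ y := by positivity
  calc _ ≤ (3 * N / n) ^ W.card *
        ((1 + d) ^ W.card * (T * (2 * d * n / N) ^ (2 * W.card))) := by
        refine mul_le_mul hc (hB.trans ?_) (Nat.cast_nonneg _) (by positivity)
        gcongr
    _ = T * y ^ W.card := by
        rw [pow_mul, mul_left_comm ((1 + d : ℝ) ^ W.card), ← mul_pow, mul_left_comm, ← mul_pow, hy]
        congr 2
        field_simp
        ring
    _ ≤ T * (y * (1 / 2) ^ m) := by
        rw [hm, pow_succ']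
        gcongr
    _ = _ := by
        rw [hm, pow_succ', hy]
        ring

theorem choose_mul_card_denseOn_large {d τ : ℕ} {W : Finset V} {c η : ℝ} (hd : 0 < d)
    (hτ : 2 * τ < d) (hW : 0 < W.card) (hc : 0 < c) (hWN : W.card < Fintype.card V)
    (hWc : c ≤ (1 - W.card / Fintype.card V : ℝ) ^ 2) (hN : 4 * d ≤ c * Fintype.card V)
    (hτW : (W.card : ℝ) / Fintype.card V ≤ 2 * τ / d)
    (hrate : d * entF (W.card / Fintype.card V) (2 * τ / d) + entHH (W.card / Fintype.card V) ≤
      -η * (W.card / Fintype.card V)) :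
    ((Fintype.card V).choose W.card : ℝ) * (denseOn d τ W).card ≤
      (regularGraphs V d).card *
        ((d * Fintype.card V + 1) * (exp (4 * d ^ 2 / c) * exp (-η * W.card))) := by
  have hB := card_denseOn_le (d := d) (τ := τ) (W := W) fun q hq =>
    card_regularWith_large hd hW hc hWN hWc hN hτ hτW hq
  have hch := choose_le_exp_entHH hW hWN
  have hnN : (W.card : ℝ) ≤ Fintype.card V := by exact_mod_cast hWN.le
  have hn0 : (0 : ℝ) < W.card := by exact_mod_cast hW
  set N : ℝ := (Fintype.card V : ℝ)
  set n : ℝ := (W.card : ℝ)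
  set T : ℝ := ((regularGraphs V d).card : ℝ)
  have hN0 : 0 < N := hn0.trans_le hnN
  have hexp : exp (N * entHH (n / N)) * exp (N * (d * entF (n / N) (2 * τ / d))) ≤
      exp (-η * n) := by
    rw [← exp_add]
    refine exp_le_exp.2 ?_
    calc _ = N * (d * entF (n / N) (2 * τ / d) + entHH (n / N)) := by ring
      _ ≤ N * (-η * (n / N)) := by gcongr
      _ = _ := by field_simp
  calc _ ≤ exp (N * entHH (n / N)) * ((d * N + 1) *
        (T * (exp (4 * d ^ 2 / c) * exp (N * (d * entF (n / N) (2 * τ / d)))))) := by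
        refine mul_le_mul hch (hB.trans ?_) (Nat.cast_nonneg _) (by positivity)
        gcongr
    _ = T * ((d * N + 1) * (exp (4 * d ^ 2 / c) *
        (exp (N * entHH (n / N)) * exp (N * (d * entF (n / N) (2 * τ / d)))))) := by ring
    _ ≤ _ := by gcongr

theorem exists_forall_card_denseGraphs_le {d τ : ℕ} {σ η : ℝ} (hd : 0 < d) (hτ : 2 ≤ τ)
    (hτd : 2 * τ < d) (hσ1 : σ < 1) (hστ : σ ≤ 2 * τ / d) (hη : 0 < η)
    (hrate : ∀ x : ℝ, 0 < x → x ≤ σ → d * entF x (2 * τ / d) + entHH x ≤ -η * x)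
    {δ : ℝ} (hδ : 0 < δ) :
    ∃ N₀ : ℕ, ∀ N : ℕ, N₀ ≤ N → ((denseGraphs (Fin N) d τ σ).card : ℝ) ≤
      δ * (regularGraphs (Fin N) d).card := by
  set c : ℝ := (1 - σ) ^ 2 with hc
  have hc0 : 0 < c := by
    have : 0 < 1 - σ := by linarith
    positivity
  have hd0 : (0 : ℝ) < d := by exact_mod_cast hd
  set C : ℝ := 24 * d ^ 2 * (d + 1) with hC
  have hC0 : 0 < C := by positivity
  set K : ℝ := exp (4 * d ^ 2 / c)
  set b : ℝ := η / C with hb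
  have hb0 : 0 < b := by positivity
  have hlim : Tendsto (fun N : ℕ => C / N * 2 +
      ((N : ℝ) + 1) * ((d * N + 1) * (K * exp (-b * N)))) atTop (𝓝 0) := by
    have hT := tendsto_natCast_atTop_atTop (R := ℝ)
    have he : ∀ j : ℕ, Tendsto (fun N : ℕ => (N : ℝ) ^ j * exp (-b * N)) atTop (𝓝 0) := by
      intro j
      have h := tendsto_rpow_mul_exp_neg_mul_atTop_nhds_zero j b hb0
      refine (h.comp hT).congr fun N => ?_
      simp [rpow_natCast]
    have h0 := (tendsto_const_nhds (x := C)).div_atTop hT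
    have h := (h0.mul_const 2).add ((((he 2).const_mul (d * K)).add ((he 1).const_mul
      ((d + 1) * K))).add ((he 0).const_mul K))
    simp only [mul_zero, zero_mul, add_zero] at h
    refine h.congr fun N => ?_
    ring
  obtain ⟨N₁, hN₁⟩ := eventually_atTop.1 (hlim.eventually (eventually_le_nhds hδ))
  refine ⟨max N₁ (max (8 * d) ⌈4 * d / c⌉₊), fun N hN => ?_⟩
  have hN1 : N₁ ≤ N := (le_max_left _ _).trans hN
  have hN2 : 8 * d ≤ N := ((le_max_left _ _).trans (le_max_right _ _)).trans hN
  have hN3 : 4 * d ≤ c * N := by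
    have h1 : ⌈4 * d / c⌉₊ ≤ N := ((le_max_right _ _).trans (le_max_right _ _)).trans hN
    have h2 := (Nat.le_ceil (4 * d / c)).trans (by exact_mod_cast h1 : (⌈4 * d / c⌉₊ : ℝ) ≤ N)
    rw [div_le_iff₀ hc0] at h2
    linarith
  have hN0 : (0 : ℝ) < N := by exact_mod_cast (by omega : 0 < N)
  set T : ℝ := ((regularGraphs (Fin N) d).card : ℝ)
  have hT0 : 0 ≤ T := Nat.cast_nonneg _
  set u : ℕ → ℝ := fun n => T * (C / N * (n * (1 / 2) ^ n) +
    (d * N + 1) * (K * exp (-b * N))) with hu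
  have hmain := card_denseGraphs_le (V := Fin N) (d := d) (τ := τ) (σ := σ) (u := u)
    (fun n => by positivity) (fun W hW hWσ => by
      rcases le_or_gt (24 * d ^ 2 * (d + 1) * W.card) N with hle | hgt
      · have h := choose_mul_card_denseOn_small hd hτ hW (by simpa using hN2) (by simpa using hle)
        refine h.trans ?_
        rw [Fintype.card_fin]
        refine mul_le_mul_of_nonneg_left ?_ hT0
        have : 0 ≤ (d * N + 1) * (K * exp (-b * N)) := by positivity
        linarith
      · have hgt' : (N : ℝ) < C * W.card := by rw [hC]; exact_mod_cast hgt
        rw [Fintype.card_fin] at hWσ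
        have hx : (W.card : ℝ) / N ≤ σ := by rwa [div_le_iff₀ hN0]
        have hn0 : (0 : ℝ) < W.card := by exact_mod_cast hW
        have h := choose_mul_card_denseOn_large (τ := τ) (η := η) (W := W) hd hτd hW hc0
          (by
            rw [Fintype.card_fin]
            have : (W.card : ℝ) < N := by nlinarith
            exact_mod_cast this)
          (by
            rw [Fintype.card_fin, hc]
            have : 0 ≤ 1 - σ := by linarith
            gcongr)
          (by rwa [Fintype.card_fin])
          (by rw [Fintype.card_fin]; exact hx.trans hστ)
          (by rw [Fintype.card_fin]; exact hrate _ (by positivity) hx)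
        refine h.trans ?_
        rw [Fintype.card_fin]
        refine mul_le_mul_of_nonneg_left ?_ hT0
        have h1 : exp (-η * W.card) ≤ exp (-b * N) := by
          refine exp_le_exp.2 ?_
          have : b * N ≤ η * W.card := by
            rw [hb, div_mul_eq_mul_div, div_le_iff₀ hC0]
            nlinarith
          linarith
        have h2 : (d * N + 1) * (K * exp (-η * W.card)) ≤ (d * N + 1) * (K * exp (-b * N)) := by
          gcongr
        have h3 : 0 ≤ C / N * ((W.card : ℝ) * (1 / 2) ^ W.card) := by positivity
        linarith)
  have hsum : ∑ n ∈ Finset.range (N + 1), ((n : ℝ) * (1 / 2) ^ n) ≤ 2 := by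
    have h := hasSum_coe_mul_geometric_of_norm_lt_one (r := (1 / 2 : ℝ)) (by norm_num)
    have h2 := sum_le_hasSum (Finset.range (N + 1)) (fun n _ => by positivity) h
    norm_num at h2 ⊢
    exact h2
  have hfin := hN₁ N hN1
  refine hmain.trans ?_
  rw [Fintype.card_fin, hu, ← Finset.mul_sum, Finset.sum_add_distrib, ← Finset.mul_sum,
    Finset.sum_const, Finset.card_range, nsmul_eq_mul, mul_comm δ]
  refine mul_le_mul_of_nonneg_left (le_trans ?_ hfin) hT0
  push_cast
  gcongr

end Dense

section Main

open Real

variable {V : Type*} [Fintype V]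

theorem hasStarDecomp_ite [DecidableEq V] {G : SimpleGraph V} {k s r d : ℕ} (hk : 0 < k)
    (hs : 1 ≤ s) (hr : r ≤ 2 * k) (hd : d = 2 * s * k + r) (hG : IsRegularGraph G d)
    (hsmall : ∀ W : Finset V, 2 * k * W.card ≤ r * Fintype.card V →
      (adjPairs G W W).card ≤ 2 * (k * s + r - k) * W.card + 1)
    (hlarge : ∀ U : Finset V, 2 * k * U.card ≤ (2 * k - r) * Fintype.card V →
      (adjPairs G U U).card ≤ 2 * (k * s) * U.card + 1)
    (A : Finset V) (hA : A.card * (2 * k) = r * Fintype.card V) :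
    HasStarDecomp G k fun v => if v ∈ A then s + 1 else s := by
  have hsum : ∀ U : Finset V, ∑ v ∈ U, (if v ∈ A then s + 1 else s) * k =
      k * s * U.card + k * (U ∩ A).card := by
    intro U
    have : ∀ v, (if v ∈ A then s + 1 else s) * k = k * s + if v ∈ A then k else 0 := by
      intro v
      split_ifs <;> ring
    simp_rw [this]
    rw [Finset.sum_add_distrib, Finset.sum_const, Finset.sum_ite_mem, Finset.sum_const,
      smul_eq_mul, smul_eq_mul]
    ring
  refine hasStarDecomp_of_forall_le hk ?_ fun U => ?_
  · rw [hsum, card_adjPairs_univ hG, Finset.univ_inter, Finset.card_univ, hd]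
    linear_combination hA.symm
  rw [hsum]
  rcases Nat.le_total (2 * k * U.card) ((2 * k - r) * Fintype.card V) with h | h
  · have := hlarge U h
    nlinarith
  · have hUc : U.card + Uᶜ.card = Fintype.card V := Finset.card_add_card_compl U
    have hAc : (U ∩ A).card + (Uᶜ ∩ A).card = A.card := by
      rw [Finset.inter_comm, Finset.inter_comm Uᶜ, ← Finset.sdiff_eq_inter_compl,
        Finset.card_inter_add_card_sdiff]
    have hle : (Uᶜ ∩ A).card ≤ Uᶜ.card := Finset.card_le_card Finset.inter_subset_left
    have e1 := card_adjPairs_add_compl hG U U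
    have e2 := card_adjPairs_add_compl hG Uᶜ U
    rw [card_adjPairs_comm G Uᶜ U] at e2
    have hks : k ≤ k * s := Nat.le_mul_of_pos_right k hs
    have hW := hsmall Uᶜ (by
      zify [hr] at h hUc ⊢
      nlinarith)
    zify [show k ≤ k * s + r by omega] at hW hUc hAc hle e1 e2 hA hd ⊢
    have hk' : (0 : ℤ) < k := by exact_mod_cast hk
    have := mul_le_mul_of_nonneg_left hle hk'.le
    rw [hd] at e1 e2
    rw [← hAc, ← hUc] at hA
    nlinarith

theorem mem_denseGraphs {d τ : ℕ} {σ : ℝ} {G : SimpleGraph V} :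
    G ∈ denseGraphs V d τ σ ↔ IsRegularGraph G d ∧ ∃ W : Finset V,
      (W.card : ℝ) ≤ σ * Fintype.card V ∧ 2 * τ * W.card + 2 ≤ (adjPairs G W W).card := by
  classical
  simp only [denseGraphs, denseOn, regularGraphs, Finset.mem_filter, Finset.mem_univ, true_and]
  exact ⟨fun ⟨h, W, h1, _, h2⟩ => ⟨h, W, h1, h2⟩, fun ⟨h, W, h1, h2⟩ => ⟨h, W, h1, h, h2⟩⟩

/-- The rate function at `1 - ρ`, with the parameter belonging to sets of density at most `1 - ρ`,
agrees with the one at `ρ`. -/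
theorem entF_add_entHH_compl {k s ρ d : ℝ} (hk : 0 < k) (hs : 0 < s) (hρ : 0 < ρ)
    (hd : d = 2 * k * (s + ρ)) :
    d * entF (1 - ρ) (2 * (k * s) / d) + entHH (1 - ρ) =
      d * entF ρ (2 * (k * (s + 2 * ρ - 1)) / d) + entHH ρ := by
  have hd0 : d ≠ 0 := by rw [hd]; positivity
  have hsρ : s + ρ ≠ 0 := by positivity
  set t := 2 * (k * s) / d with ht
  set u := 2 * (k * (s + 2 * ρ - 1)) / d with hu
  have ht' : t = s / (s + ρ) := by rw [ht, hd]; field_simp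
  have hu' : u = (s + 2 * ρ - 1) / (s + ρ) := by rw [hu, hd]; field_simp
  have e1 : t * (1 - ρ) = 1 - (2 - u) * ρ := by rw [ht', hu']; field_simp; ring
  have e2 : (1 - t) * (1 - ρ) = (1 - u) * ρ := by rw [ht', hu']; field_simp; ring
  have e3 : 1 - (2 - t) * (1 - ρ) = u * ρ := by rw [ht', hu']; field_simp; ring
  unfold entF entHH
  rw [e1, e2, e3, sub_sub_cancel]
  ring

theorem rate_le_neg_mul {d t σ : ℝ} (hd : 2 ≤ d) (ht0 : 0 < t) (ht1 : t < 1) (hσ : 0 < σ)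
    (hσ1 : σ < 1) (hcσ : (2 - t) * σ < 1)
    (hg : (d - 1) * log (1 - σ) ≤ d / 2 * log (1 - (2 - t) * σ)) (x : ℝ) (hx : 0 < x)
    (hxσ : x ≤ σ) :
    d * entF x t + entHH x ≤ -(-(d * entF σ t + entHH σ) / σ) * x :=
  (rate_le_mul hd ht0 ht1 hσ hσ1 hcσ hg hx hxσ).trans_eq (by ring)

theorem exists_forall_card_denseGraphs_le_of_rate {k s r d : ℕ} (hk : 2 ≤ k) (hs : 1 ≤ s)
    (hr0 : 0 < r) (hr : r < 2 * k) (hd : d = 2 * s * k + r)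
    (hcond : (d : ℝ) * entF ((r : ℝ) / (2 * k)) (((d : ℝ) - 2 * k + r) / d)
        + entHH ((r : ℝ) / (2 * k)) < 0) {δ : ℝ} (hδ : 0 < δ) :
    ∃ N₀ : ℕ, ∀ N : ℕ, N₀ ≤ N →
      ((denseGraphs (Fin N) d (k * s + r - k) (r / (2 * k))).card : ℝ) ≤
        δ * (regularGraphs (Fin N) d).card ∧
      ((denseGraphs (Fin N) d (k * s) (1 - r / (2 * k))).card : ℝ) ≤
        δ * (regularGraphs (Fin N) d).card := by
  have hsr : 2 ≤ s ∨ s = 1 ∧ 2 ≤ r := by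
    by_contra! h
    obtain rfl : s = 1 := by omega
    obtain rfl : r = 1 := by
      have := h.2 rfl
      omega
    have hd' : (d : ℝ) = 2 * k + 1 := by rw [hd]; push_cast; ring
    have := rate_nonneg_of_one (k := k) (d := d) (by exact_mod_cast hk) hd'
    push_cast at hcond
    linarith
  have hks : k ≤ k * s := Nat.le_mul_of_pos_right k hs
  have hdks : d = 2 * (k * s) + r := by rw [hd]; ring
  have hk' : (2 : ℝ) ≤ k := by exact_mod_cast hk
  have hk0 : (0 : ℝ) < k := by linarith
  have hs' : (1 : ℝ) ≤ s := by exact_mod_cast hs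
  set ρ : ℝ := r / (2 * k) with hρ
  have hr' : (r : ℝ) = 2 * (k * ρ) := by rw [hρ]; field_simp
  have hρ0 : 0 < ρ := by
    have : (0 : ℝ) < r := by exact_mod_cast hr0
    positivity
  have hρ1 : ρ < 1 := by
    rw [hρ, div_lt_one (by positivity)]
    exact_mod_cast hr
  have hd' : (d : ℝ) = 2 * k * (s + ρ) := by rw [hd]; push_cast; rw [hr']; ring
  have hsρ : 0 < s + ρ := by linarith
  have hd2 : (2 : ℝ) ≤ d := by rw [hd']; nlinarith
  have hd0 : (0 : ℝ) < d := by linarith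
  have hτ : ((k * s + r - k : ℕ) : ℝ) = k * (s + 2 * ρ - 1) := by
    rw [Nat.cast_sub (by omega)]
    push_cast
    rw [hr']
    ring
  have htW : 2 * ((k * s + r - k : ℕ) : ℝ) / d = (s + 2 * ρ - 1) / (s + ρ) := by
    rw [hτ, hd']
    field_simp
  have htU : 2 * ((k * s : ℕ) : ℝ) / d = s / (s + ρ) := by
    rw [hd']
    push_cast
    field_simp
  have hcondW : d * entF ρ (2 * ((k * s + r - k : ℕ) : ℝ) / d) + entHH ρ < 0 := by
    convert hcond using 4
    rw [hτ, hd', hr']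
    ring
  have hcondU : d * entF (1 - ρ) (2 * ((k * s : ℕ) : ℝ) / d) + entHH (1 - ρ) < 0 := by
    rw [hτ, ← entF_add_entHH_compl hk0 (by linarith) hρ0 hd'] at hcondW
    push_cast
    exact hcondW
  have hsW : (2 : ℝ) ≤ s ∨ (s : ℝ) = 1 ∧ 1 ≤ k * ρ := by
    refine hsr.imp (fun h => by exact_mod_cast h) fun h => ⟨by exact_mod_cast h.1, ?_⟩
    have : (2 : ℝ) ≤ r := by exact_mod_cast h.2
    linarith
  have hsU : 2 ≤ (s : ℝ) ∧ 1 ≤ 2 * (k * ρ) ∨ (s : ℝ) = 1 ∧ 1 ≤ k * ρ := by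
    refine hsW.imp_left fun h => ⟨h, ?_⟩
    rw [← hr']
    exact_mod_cast hr0
  have hρ1' : 0 < 1 - ρ := by linarith
  have hbW : 1 - (2 - (s + 2 * ρ - 1) / (s + ρ)) * ρ = (1 - ρ) * (s / (s + ρ)) := by
    field_simp
    ring
  have hbU : 1 - (2 - s / (s + ρ)) * (1 - ρ) = ρ * ((s - 1 + 2 * ρ) / (s + ρ)) := by
    field_simp
    ring
  have hA : 0 < (s - 1 + 2 * ρ) / (s + ρ) := div_pos (by linarith) hsρ
  have hB : 0 < s / (s + ρ) := div_pos (by linarith) hsρ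
  have hW := rate_le_neg_mul (d := d) (t := 2 * ((k * s + r - k : ℕ) : ℝ) / d) (σ := ρ) hd2
    (by rw [htW]; exact div_pos (by linarith) hsρ) (by rw [htW, div_lt_one hsρ]; linarith)
    hρ0 hρ1 (by rw [htW]; nlinarith [mul_pos hρ1' hB])
    (by
      rw [htW, hbW, log_mul hρ1'.ne' hB.ne', hd']
      have := log_boundary_small hk' hρ0 hρ1 hsW
      linarith)
  have hU := rate_le_neg_mul (d := d) (t := 2 * ((k * s : ℕ) : ℝ) / d) (σ := 1 - ρ) hd2
    (by rw [htU]; exact hB) (by rw [htU, div_lt_one hsρ]; linarith)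
    hρ1' (by linarith) (by rw [htU]; nlinarith [mul_pos hρ0 hA])
    (by
      rw [htU, hbU, log_mul hρ0.ne' hA.ne', hd', sub_sub_cancel]
      have := log_boundary_large hk' hρ0 hρ1 hsU
      linarith)
  obtain ⟨N₁, hN₁⟩ := exists_forall_card_denseGraphs_le (d := d) (τ := k * s + r - k)
    (by omega) (by
      rcases hsr with h | ⟨rfl, h⟩
      · have := Nat.mul_le_mul_left k h
        omega
      · omega) (by omega) hρ1
    (by rw [htW, le_div_iff₀ hsρ]; nlinarith) (div_pos (neg_pos.2 hcondW) hρ0) hW hδ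
  obtain ⟨N₂, hN₂⟩ := exists_forall_card_denseGraphs_le (d := d) (τ := k * s)
    (by omega) (by omega) (by omega) (by linarith)
    (by rw [htU, le_div_iff₀ hsρ]; nlinarith) (div_pos (neg_pos.2 hcondU) hρ1') hU hδ
  exact ⟨max N₁ N₂, fun N hN =>
    ⟨hN₁ N ((le_max_left _ _).trans hN), hN₂ N ((le_max_right _ _).trans hN)⟩⟩

theorem hasStarDecomp_of_notMem_denseGraphs [DecidableEq V] {G : SimpleGraph V} {k s r d : ℕ}
    (hk : 0 < k) (hs : 1 ≤ s) (hr : r ≤ 2 * k) (hd : d = 2 * s * k + r)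
    (hG : IsRegularGraph G d) (hW : G ∉ denseGraphs V d (k * s + r - k) (r / (2 * k)))
    (hU : G ∉ denseGraphs V d (k * s) (1 - r / (2 * k)))
    (A : Finset V) (hA : A.card * (2 * k) = r * Fintype.card V) :
    HasStarDecomp G k fun v => if v ∈ A then s + 1 else s := by
  have hk' : (0 : ℝ) < 2 * k := by positivity
  simp only [mem_denseGraphs, hG, true_and, not_exists, not_and] at hW hU
  refine hasStarDecomp_ite hk hs hr hd hG (fun W h => ?_) (fun U h => ?_) A hA
  · have := hW W (by
      rw [div_mul_eq_mul_div, le_div_iff₀' hk']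
      exact_mod_cast h)
    omega
  · have := hU U (by
      rw [one_sub_div hk'.ne', div_mul_eq_mul_div, le_div_iff₀' hk']
      zify [hr] at h
      exact_mod_cast h)
    omega

theorem stmt_14 (k s r d : ℕ) (hk : 2 ≤ k) (hs : 1 ≤ s) (hr0 : 0 < r) (hr : r < 2 * k)
    (hd : d = 2 * s * k + r)
    (hcond : (d : ℝ) * entF ((r : ℝ) / (2 * k)) (((d : ℝ) - 2 * k + r) / d)
        + entHH ((r : ℝ) / (2 * k)) < 0)
    (δ : ℝ) (hδ : 0 < δ) :
    ∃ N₀ : ℕ, ∀ N : ℕ, N₀ ≤ N → 2 * k ∣ N * d →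
      (1 - δ) * (Nat.card {G : SimpleGraph (Fin N) // IsRegularGraph G d} : ℝ) ≤
        (Nat.card {G : SimpleGraph (Fin N) // IsRegularGraph G d ∧
          ∀ A : Finset (Fin N), A.card * (2 * k) = r * N →
            HasStarDecomp G k (fun v => if v ∈ A then s + 1 else s)} : ℝ) := by
  classical
  obtain ⟨N₀, hN₀⟩ :=
    exists_forall_card_denseGraphs_le_of_rate hk hs hr0 hr hd hcond (half_pos hδ)
  refine ⟨N₀, fun N hN _ => ?_⟩
  obtain ⟨hW, hU⟩ := hN₀ N hN
  rw [Nat.card_eq_fintype_card, Nat.card_eq_fintype_card, Fintype.card_subtype,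
    Fintype.card_subtype]
  set good := Finset.univ.filter fun G : SimpleGraph (Fin N) => IsRegularGraph G d ∧
    ∀ A : Finset (Fin N), A.card * (2 * k) = r * N →
      HasStarDecomp G k (fun v => if v ∈ A then s + 1 else s)
  have hreg : regularGraphs (Fin N) d = Finset.univ.filter fun G => IsRegularGraph G d := by
    ext G
    simp [regularGraphs]
  rw [← hreg]
  set DW := denseGraphs (Fin N) d (k * s + r - k) (r / (2 * k))
  set DU := denseGraphs (Fin N) d (k * s) (1 - r / (2 * k))
  have hsub : regularGraphs (Fin N) d ⊆ good ∪ (DW ∪ DU) := by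
    intro G hG
    rw [hreg, Finset.mem_filter] at hG
    rw [Finset.mem_union, Finset.mem_union]
    by_contra! h
    refine h.1 (Finset.mem_filter.2 ⟨Finset.mem_univ G, hG.2, fun A hA => ?_⟩)
    exact hasStarDecomp_of_notMem_denseGraphs (by omega) hs hr.le hd hG.2 h.2.1 h.2.2 A
      (by rwa [Fintype.card_fin])
  have h1 := (Finset.card_le_card hsub).trans ((Finset.card_union_le _ _).trans
    (Nat.add_le_add_left (Finset.card_union_le _ _) _))
  have h2 : ((regularGraphs (Fin N) d).card : ℝ) ≤ good.card + (DW.card + DU.card) := by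
    exact_mod_cast h1
  linarith

end Main
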